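/- arXiv:2604.25461 — 12 statements merged into one kernel-verified Lean document; each statement's English description precedes it below -/
import Mathlib

section
/- Let q = p^n be a prime power with q ≥ 3, let r ≥ 2 be an integer, and let k = (q^r − 1)/(q − 1). Then for every 0 ≤ a ≤ q−2 and 0 ≤ b ≤ q−2, the cyclotomic number (a,b)_{q−1} over 𝔽_{q^r} satisfies (a,b)_{q−1} ≤ ⌈k/2⌉. -/
/-- `x` lies in the cyclotomic coset `C_a = ω^a ⟨ω^e⟩` of `Fˣ`. -/
def InCycCoset {F : Type*} [Field F] (ω : Fˣ) (e a : ℕ) (x : Fˣ) : Prop :=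
  ∃ m : ℕ, x = ω ^ a * (ω ^ e) ^ m

/-- The cyclotomic number `(a,b)_e` : the number of `x ∈ C_a` with `x + 1 ∈ C_b`. -/
noncomputable def cycNum {F : Type*} [Field F] (ω : Fˣ) (e a b : ℕ) : ℕ :=
  Nat.card {x : Fˣ | InCycCoset ω e a x ∧ ∃ y : Fˣ, InCycCoset ω e b y ∧ (y : F) = (x : F) + 1}

open Polynomial in
lemma cyc_poly_bound {F : Type*} [Field F] (K : ℕ) (hK : 1 ≤ K) (α β : F) :
    ∃ T : Finset F, T.card ≤ 2 * K ∧
      ∀ x : F, (x + 1) ^ K * (x ^ K + α) = β * x ^ K → x ∈ T := by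
  classical
  have h1 : ((X + C 1 : F[X]) ^ K * (X ^ K + C α)).Monic :=
    ((monic_X_add_C 1).pow K).mul (monic_X_pow_add_C α (by omega))
  have hd : ((X + C 1 : F[X]) ^ K * (X ^ K + C α)).natDegree = 2 * K := by
    rw [((monic_X_add_C (1 : F)).pow K).natDegree_mul (monic_X_pow_add_C α (by omega)),
      natDegree_pow, natDegree_X_add_C, natDegree_X_pow_add_C]
    omega
  have hlt : (C β * X ^ K : F[X]).natDegree
      < ((X + C 1 : F[X]) ^ K * (X ^ K + C α)).natDegree := by
    have := natDegree_C_mul_X_pow_le β K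
    omega
  set P : F[X] := (X + C 1 : F[X]) ^ K * (X ^ K + C α) - C β * X ^ K with hP
  have hdP : P.natDegree = 2 * K := by
    rw [hP, natDegree_sub_eq_left_of_natDegree_lt hlt, hd]
  have hP0 : P ≠ 0 := by
    intro h
    rw [h, natDegree_zero] at hdP
    omega
  refine ⟨P.roots.toFinset, ?_, ?_⟩
  · exact (Multiset.toFinset_card_le _).trans ((card_roots' P).trans hdP.le)
  · intro x hx
    rw [Multiset.mem_toFinset, mem_roots hP0, IsRoot.def, hP]
    simp [hx]

lemma cycNum_le_card {F : Type*} [Field F] (ω : Fˣ) (e a b : ℕ) (T : Finset F)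
    (h : ∀ x y : Fˣ, InCycCoset ω e a x → InCycCoset ω e b y → (y : F) = (x : F) + 1 →
      (x : F) ∈ T) : cycNum ω e a b ≤ T.card := by
  unfold cycNum
  rw [← Nat.card_eq_finsetCard T]
  refine Nat.card_le_card_of_injective
    (fun x => (⟨(x.1 : F), by
      obtain ⟨h1, y, h2, h3⟩ := x.2
      exact h x.1 y h1 h2 h3⟩ : T)) ?_
  intro x x' hxx
  exact Subtype.ext (Units.ext (congrArg Subtype.val hxx))

lemma cyc_char_sum {F : Type*} [Field F] [Fintype F] [DecidableEq F] (hF : ringChar F ≠ 2) :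
    ∑ x : F, quadraticChar F x * quadraticChar F (x + 1) = -1 := by
  have hne := quadraticChar_ne_one hF
  have hJ := jacobiSum_nontrivial_inv hne
  rw [(quadraticChar_isQuadratic F).inv, jacobiSum] at hJ
  have hs : quadraticChar F (-1) ^ 2 = 1 := quadraticChar_sq_one (by simp)
  have : ∑ x : F, quadraticChar F x * quadraticChar F (1 - x)
      = quadraticChar F (-1) * ∑ x : F, quadraticChar F x * quadraticChar F (x + 1) := by
    rw [Finset.mul_sum]
    refine Fintype.sum_equiv (Equiv.neg F) _ _ fun x => ?_
    simp only [Equiv.neg_apply]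
    rw [← mul_assoc, ← map_mul _ (-1 : F) (-x), neg_one_mul, neg_neg, neg_add_eq_sub]
  rw [this] at hJ
  linear_combination quadraticChar F (-1) * hJ -
    (1 + ∑ x : F, quadraticChar F x * quadraticChar F (x + 1)) * hs

lemma cyc_three {F : Type*} [Field F] [Fintype F] [DecidableEq F] (hF : ringChar F ≠ 2)
    (α β : ℤ) (hα : α ^ 2 = 1) (hβ : β ^ 2 = 1) :
    4 * (Finset.univ.filter fun x : F => quadraticChar F x = α ∧
      quadraticChar F (x + 1) = β).card ≤ Fintype.card F + 1 := by
  have h0 : ∑ x : F, quadraticChar F x = 0 := quadraticChar_sum_zero hF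
  have h1 : ∑ x : F, quadraticChar F (x + 1) = 0 := by
    rw [← h0]
    exact Fintype.sum_equiv (Equiv.addRight 1) _ _ fun x => rfl
  have h2 := cyc_char_sum hF
  have hv : ∀ x : F, quadraticChar F x = 0 ∨ quadraticChar F x = 1 ∨ quadraticChar F x = -1 :=
    quadraticChar_isQuadratic F
  have hα' : α = 1 ∨ α = -1 := by simpa using hα
  have hβ' : β = 1 ∨ β = -1 := by simpa using hβ
  have key : ∑ x : F, (1 + α * quadraticChar F x) * (1 + β * quadraticChar F (x + 1))
      = Fintype.card F - α * β := by
    have : ∀ x : F, (1 + α * quadraticChar F x) * (1 + β * quadraticChar F (x + 1)) =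
      1 + α * quadraticChar F x + β * quadraticChar F (x + 1) +
        α * β * (quadraticChar F x * quadraticChar F (x + 1)) := fun x => by ring
    simp only [this, Finset.sum_add_distrib, ← Finset.mul_sum, h0, h1, h2]
    simp
    ring
  have hle : ∑ x : F, (if quadraticChar F x = α ∧ quadraticChar F (x + 1) = β then (4 : ℤ) else 0)
      ≤ ∑ x : F, (1 + α * quadraticChar F x) * (1 + β * quadraticChar F (x + 1)) := by
    refine Finset.sum_le_sum fun x _ => ?_
    rcases hα' with rfl | rfl <;> rcases hβ' with rfl | rfl <;> rcases hv x with h | h | h <;>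
      rcases hv (x + 1) with h' | h' | h' <;> rw [h, h'] <;> norm_num
  rw [key, ← Finset.sum_filter, Finset.sum_const, nsmul_eq_mul] at hle
  have : -(α * β) ≤ 1 := by
    rcases hα' with rfl | rfl <;> rcases hβ' with rfl | rfl <;> norm_num
  zify
  linarith

/-- If `q = p^n ≥ 3` is a prime power, `r ≥ 2`, and `k = (q^r - 1)/(q - 1)`, then every
cyclotomic number `(a,b)_{q-1}` over `𝔽_{q^r}` is at most `⌈k/2⌉`. -/
theorem cycNum_le_ceil_half_k {p n q r k : ℕ} (hp : p.Prime) (hn : 1 ≤ n) (hq : q = p ^ n)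
    (hq3 : 3 ≤ q) (hr : 2 ≤ r) (hk : k = (q ^ r - 1) / (q - 1))
    {F : Type*} [Field F] [Fintype F] (hF : Fintype.card F = q ^ r)
    (ω : Fˣ) (hω : ∀ x : Fˣ, x ∈ Subgroup.zpowers ω)
    (a b : ℕ) (ha : a ≤ q - 2) (hb : b ≤ q - 2) :
    cycNum ω (q - 1) a b ≤ (k + 1) / 2 := by
  classical
  obtain ⟨s, rfl⟩ : ∃ s, r = s + 1 := ⟨r - 1, by omega⟩
  rw [← Nat.geomSum_eq (by omega : 2 ≤ q)] at hk
  set K := ∑ i ∈ Finset.range s, q ^ i with hKdef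
  have hk1 : k = K + q ^ s := by rw [hk, Finset.sum_range_succ]
  have hk2 : k = q * K + 1 := by rw [hk, Finset.sum_range_succ', hKdef, Finset.mul_sum]; simp [pow_succ']
  have hgs : (q - 1) * k = q ^ (s + 1) - 1 := by
    rw [hk, mul_comm, Nat.geomSum_eq (by omega : 2 ≤ q)]
    exact Nat.div_mul_cancel (by simpa using Nat.sub_dvd_pow_sub_pow q 1 (s+1))
  have hK1 : 1 ≤ K := by
    obtain ⟨t, rfl⟩ : ∃ t, s = t + 1 := ⟨s - 1, by omega⟩
    rw [hKdef, Finset.sum_range_succ']; simp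
  rcases Nat.lt_or_ge 3 q with h4 | h4
  · have : Fact p.Prime := ⟨hp⟩
    have : CharP F p := by
      apply charP_of_card_eq_prime_pow (f := n * (s + 1))
      rw [hF, hq, pow_mul]
    have hc : ∀ c (x : Fˣ), InCycCoset ω (q - 1) c x → (x : F) ^ k = ((ω ^ c) ^ k : Fˣ) := by
      rintro c x ⟨m, rfl⟩
      rw [← Units.val_pow_eq_pow_val]
      congr 1
      rw [mul_pow, ← pow_mul (ω ^ (q-1)), mul_comm m, pow_mul (ω ^ (q-1)), ← pow_mul ω (q-1), hgs,
        ← hF, ← Fintype.card_units, pow_card_eq_one, one_pow, mul_one]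
    obtain ⟨T, hT, hx⟩ := cyc_poly_bound K hK1 (((ω ^ a) ^ k : Fˣ) : F) (((ω ^ b) ^ k : Fˣ) : F)
    refine (cycNum_le_card ω _ a b T fun x y hxa hyb hxy => hx x ?_).trans ?_
    · rw [← hc a x hxa, ← hc b y hyb, hxy, hk1, pow_add, pow_add, hq, ← pow_mul, add_pow_char_pow]
      ring
    · have : 4 * K ≤ q * K := Nat.mul_le_mul_right _ h4
      omega
  · obtain rfl : q = 3 := by omega
    have hc2 : ringChar F ≠ 2 := by
      intro h
      have := FiniteField.even_card_of_char_two h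
      rw [hF] at this
      have h3 : Odd (3 ^ (s+1)) := Odd.pow (by decide)
      rw [Nat.odd_iff] at h3
      omega
    have hsq : ∀ x : Fˣ, quadraticChar F x ^ 2 = 1 := fun x => quadraticChar_sq_one x.ne_zero
    have hc : ∀ c (x : Fˣ), InCycCoset ω 2 c x → quadraticChar F x = quadraticChar F ω ^ c := by
      rintro c x ⟨m, rfl⟩
      push_cast
      rw [map_mul, map_pow, map_pow, map_pow, hsq, one_pow, mul_one]
    have h3 := cyc_three hc2 (quadraticChar F ω ^ a) (quadraticChar F ω ^ b)
      (by rw [← pow_mul, mul_comm, pow_mul, hsq, one_pow])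
      (by rw [← pow_mul, mul_comm, pow_mul, hsq, one_pow])
    have := cycNum_le_card ω 2 a b (Finset.univ.filter fun x : F =>
      quadraticChar F x = quadraticChar F ω ^ a ∧ quadraticChar F (x + 1) = quadraticChar F ω ^ b)
      (fun x y hxa hyb hxy => by
        rw [Finset.mem_filter]
        exact ⟨Finset.mem_univ _, hc a x hxa, by rw [← hxy]; exact hc b y hyb⟩)
    have hpos : 0 < 3 ^ (s+1) := by positivity
    norm_num at hgs ⊢
    omega
end

section
/- Let q = p^n be a prime power, r ≥ 2 an integer, k = (q^r − 1)/(q − 1), and 0 ≤ a,b ≤ q−2. Then (a,b)_{q−1} = (1/(q−1)^2) · Σ_{χ,ψ} χ(ω^{−ak}) ψ(ω^{−bk}) J_{𝔽_{q^r}}(χ∘N, ψ∘N), where the sum runs over all pairs of multiplicative characters χ, ψ of 𝔽_q^× and N = N_{𝔽_{q^r}/𝔽_q} is the field norm. -/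
theorem aux_sum_char {K : Type*} [Field K] [Fintype K] [Fintype (MulChar K ℂ)] (a : K) (ha : a ≠ 1) :
    ∑ χ : MulChar K ℂ, χ a = 0 := by
  classical
  obtain ⟨χ, hχ⟩ := MulChar.exists_apply_ne_one_of_hasEnoughRootsOfUnity K ℂ ha
  refine eq_zero_of_mul_eq_self_left hχ ?_
  simp only [Finset.mul_sum, ← MulChar.mul_apply]
  exact Fintype.sum_bijective _ (Group.mulLeft_bijective χ) _ _ fun χ' ↦ rfl

theorem aux_sum_char' {K : Type*} [Field K] [Fintype K] [DecidableEq K] [Fintype (MulChar K ℂ)] (a c : K)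
    (hc : c ≠ 0) :
    ∑ χ : MulChar K ℂ, χ c⁻¹ * χ a = if a = c then ((Fintype.card K : ℂ) - 1) else 0 := by
  classical
  simp only [← map_mul]
  split_ifs with h
  · subst h
    have h1 := MulChar.card_eq_card_units_of_hasEnoughRootsOfUnity K ℂ
    rw [Nat.card_eq_fintype_card, Nat.card_eq_fintype_card, Fintype.card_units] at h1
    have h2 : 1 ≤ Fintype.card K := Fintype.card_pos
    simp [inv_mul_cancel₀ hc, h1, Nat.cast_sub h2]
  · apply aux_sum_char
    intro h1
    apply h
    field_simp at h1
    exact h1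

theorem aux_coset {q r k : ℕ} (hq : 2 ≤ q)
    (hr : 2 ≤ r) (hk : k = (q ^ r - 1) / (q - 1))
    {K F : Type*} [Field K] [Field F] [Fintype K] [Fintype F] [Algebra K F]
    (hK : Fintype.card K = q) (hF : Fintype.card F = q ^ r)
    (ω : Fˣ) (hω : ∀ x : Fˣ, x ∈ Subgroup.zpowers ω)
    (ζ : K) (hζ : algebraMap K F ζ = (ω : F) ^ k) (a : ℕ) (x : Fˣ) :
    InCycCoset ω (q - 1) a x ↔ Algebra.norm K (x : F) = ζ ^ a := by
  classical
  have hd : (q - 1) * k = q ^ r - 1 := by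
    rw [hk]; exact Nat.mul_div_cancel' (by simpa using Nat.sub_dvd_pow_sub_pow q 1 r)
  have hcu : Fintype.card Fˣ = q ^ r - 1 := by rw [Fintype.card_units, hF]
  have hord : orderOf ω = (q - 1) * k := by
    rw [hd, ← hcu, ← Nat.card_eq_fintype_card]
    exact orderOf_eq_card_of_forall_mem_zpowers hω
  have hkpos : 0 < k := by
    rcases Nat.eq_zero_or_pos k with h | h
    · have := orderOf_pos ω
      rw [hord, h] at this; simp at this
    · exact h
  have hn : algebraMap K F (Algebra.norm K (x : F)) = (x : F) ^ k := by
    rw [FiniteField.algebraMap_norm_eq_pow, Nat.card_eq_fintype_card, Nat.card_eq_fintype_card, hK, hF, hk]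
  rw [← (algebraMap K F).injective.eq_iff, hn, map_pow, hζ]
  have e : ((x : F) ^ k = ((ω : F) ^ k) ^ a) ↔ x ^ k = (ω ^ k) ^ a := by
    rw [Units.ext_iff]; simp
  rw [e]
  constructor
  · rintro ⟨m, rfl⟩
    rw [mul_pow, ← pow_mul, ← pow_mul, ← pow_mul, ← pow_mul, mul_comm a k,
      show (q - 1) * (m * k) = (q - 1) * k * m by ring, pow_mul ω ((q - 1) * k), ← hord, pow_orderOf_eq_one]
    simp
  · intro h
    have := hω (x * (ω ^ a)⁻¹)
    rw [← mem_powers_iff_mem_zpowers] at this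
    obtain ⟨i, hi⟩ := this
    simp only at hi
    have h1 : ω ^ (i * k) = 1 := by
      rw [pow_mul, hi, mul_pow, h, inv_pow, ← pow_mul, ← pow_mul, mul_comm k a, mul_inv_cancel]
    have h2 := orderOf_dvd_of_pow_eq_one h1
    rw [hord] at h2
    obtain ⟨m, rfl⟩ := Nat.dvd_of_mul_dvd_mul_right hkpos h2
    refine ⟨m, ?_⟩
    rw [← pow_mul, hi, mul_comm x, mul_inv_cancel_left]

/-- The character-sum formula for the cyclotomic number `(a,b)_{q-1}` over `𝔽_{q^r}`:
`(a,b)_{q-1} = (1/(q-1)^2) ∑_{χ,ψ} χ(ω^{-ak}) ψ(ω^{-bk}) J_{𝔽_{q^r}}(χ∘N, ψ∘N)`,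
where `N` is the field norm from `𝔽_{q^r}` to `𝔽_q` and `ζ = ω^k` viewed in `𝔽_q`. -/
theorem cycNum_eq_character_sum {p n q r k : ℕ} (hp : p.Prime) (hn : 1 ≤ n) (hq : q = p ^ n)
    (hr : 2 ≤ r) (hk : k = (q ^ r - 1) / (q - 1))
    {K F : Type*} [Field K] [Field F] [Fintype K] [Fintype F] [Algebra K F]
    (hK : Fintype.card K = q) (hF : Fintype.card F = q ^ r)
    (ω : Fˣ) (hω : ∀ x : Fˣ, x ∈ Subgroup.zpowers ω)
    (ζ : K) (hζ : algebraMap K F ζ = (ω : F) ^ k)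
    (a b : ℕ) (ha : a ≤ q - 2) (hb : b ≤ q - 2)
    [Fintype (MulChar K ℂ)] :
    (cycNum ω (q - 1) a b : ℂ) =
      (1 / ((q : ℂ) - 1) ^ 2) *
        ∑ χ : MulChar K ℂ, ∑ ψ : MulChar K ℂ,
          χ ((ζ ^ a)⁻¹) * ψ ((ζ ^ b)⁻¹) *
            ∑ x : F, χ (Algebra.norm K x) * ψ (Algebra.norm K (x + 1)) := by
  classical
  have hq2 : 2 ≤ q := hK ▸ Fintype.one_lt_card
  have hζ0 : ζ ≠ 0 := by
    rintro rfl
    rw [map_zero] at hζ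
    exact pow_ne_zero k ω.ne_zero hζ.symm
  have hco := aux_coset hq2 hr hk hK hF ω hω ζ hζ
  have hq1 : ((q : ℂ) - 1) ≠ 0 := by
    rw [sub_ne_zero]; exact_mod_cast (by omega : q ≠ 1)
  have hsum : ∑ χ : MulChar K ℂ, ∑ ψ : MulChar K ℂ,
          χ ((ζ ^ a)⁻¹) * ψ ((ζ ^ b)⁻¹) *
            ∑ x : F, χ (Algebra.norm K x) * ψ (Algebra.norm K (x + 1)) =
      ∑ x : F, (∑ χ : MulChar K ℂ, χ ((ζ ^ a)⁻¹) * χ (Algebra.norm K x)) *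
        (∑ ψ : MulChar K ℂ, ψ ((ζ ^ b)⁻¹) * ψ (Algebra.norm K (x + 1))) := by
    simp_rw [Finset.sum_mul_sum]
    symm
    rw [Finset.sum_comm]
    refine Finset.sum_congr rfl fun χ _ => ?_
    rw [Finset.sum_comm]
    refine Finset.sum_congr rfl fun ψ _ => ?_
    rw [Finset.mul_sum]
    exact Finset.sum_congr rfl fun x _ => by ring
  have hcard : cycNum ω (q - 1) a b = (Finset.univ.filter fun x : F =>
      Algebra.norm K x = ζ ^ a ∧ Algebra.norm K (x + 1) = ζ ^ b).card := by
    unfold cycNum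
    rw [Nat.card_coe_set_eq, ← Set.ncard_coe_finset, ← Set.ncard_image_of_injective _ Units.val_injective]
    congr 1
    ext x
    simp only [Set.mem_image, Set.mem_ofPred_eq, Finset.coe_filter, Finset.mem_univ, true_and, hco]
    constructor
    · rintro ⟨u, ⟨h1, y, h2, h3⟩, rfl⟩
      exact ⟨h1, h3 ▸ h2⟩
    · rintro ⟨h1, h2⟩
      have hx : x ≠ 0 := by
        rintro rfl
        rw [Algebra.norm_zero] at h1
        exact pow_ne_zero a hζ0 h1.symm
      have hy : x + 1 ≠ 0 := by
        intro h
        rw [h, Algebra.norm_zero] at h2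
        exact pow_ne_zero b hζ0 h2.symm
      exact ⟨Units.mk0 x hx, ⟨h1, Units.mk0 _ hy, h2, rfl⟩, rfl⟩
  rw [hsum, hcard]
  simp only [aux_sum_char' _ _ (pow_ne_zero _ hζ0), hK]
  rw [Finset.card_filter, Nat.cast_sum, Finset.mul_sum]
  refine Finset.sum_congr rfl fun x _ => ?_
  by_cases h1 : Algebra.norm K x = ζ ^ a <;> by_cases h2 : Algebra.norm K (x + 1) = ζ ^ b <;>
    simp [h1, h2]
  field_simp
end

section
/- Let q = p^n be a prime power and r ≥ 2 an integer. Let χ, ψ be multiplicative characters of 𝔽_q^×, and set χ̃ = χ∘N and ψ̃ = ψ∘N where N = N_{𝔽_{q^r}/𝔽_q} is the field norm. If (χ,ψ) = (1,1) (both trivial), then J_{𝔽_{q^r}}(χ̃,ψ̃) = q^r − 2 and J_{𝔽_q}(χ,ψ)^r = (q−2)^r. If (χ,ψ) ≠ (1,1), then J_{𝔽_{q^r}}(χ̃,ψ̃) = (−1)^{r−1} · J_{𝔽_q}(χ,ψ)^r. -/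
namespace JacNorm

open Polynomial Finset

theorem finite_monic (K : Type*) [Field K] [Fintype K] (n : ℕ) :
    {f : K[X] | f.Monic ∧ f.natDegree = n}.Finite := by
  have e := (monicEquivDegreeLT (R := K) n).trans (degreeLTEquiv K n).toEquiv
  exact Set.finite_coe_iff.mp (Finite.of_equiv _ e.symm)

theorem finite_irr (K : Type*) [Field K] [Fintype K] (N : ℕ) :
    {f : K[X] | f.Monic ∧ Irreducible f ∧ f.natDegree ≤ N}.Finite := by
  refine ((Set.finite_Iic N).biUnion (fun n _ => finite_monic K n)).subset ?_
  intro f hf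
  simp only [Set.mem_iUnion, Set.mem_setOf_eq, Set.mem_Iic]
  exact ⟨f.natDegree, hf.2.2, hf.1, rfl⟩

noncomputable def M (K : Type*) [Field K] [Fintype K] (n : ℕ) : Finset K[X] :=
  (finite_monic K n).toFinset

noncomputable def I (K : Type*) [Field K] [Fintype K] (N : ℕ) : Finset K[X] :=
  (finite_irr K N).toFinset

variable {K : Type*} [Field K] [Fintype K]

theorem mem_M {n : ℕ} {f : K[X]} : f ∈ M K n ↔ f.Monic ∧ f.natDegree = n := by
  simp [M]

theorem mem_I {n : ℕ} {f : K[X]} :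
    f ∈ I K n ↔ f.Monic ∧ Irreducible f ∧ f.natDegree ≤ n := by
  simp [I]

noncomputable def lam (χ ψ : MulChar K ℂ) (f : K[X]) : ℂ :=
  χ ((-1) ^ f.natDegree * f.eval 0) * ψ ((-1) ^ f.natDegree * f.eval (-1))

theorem lam_one (χ ψ : MulChar K ℂ) : lam χ ψ 1 = 1 := by simp [lam]

theorem lam_mul (χ ψ : MulChar K ℂ) {f g : K[X]} (hf : f ≠ 0) (hg : g ≠ 0) :
    lam χ ψ (f * g) = lam χ ψ f * lam χ ψ g := by
  simp only [lam, natDegree_mul hf hg, eval_mul, pow_add, map_mul]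
  ring

theorem lam_pow (χ ψ : MulChar K ℂ) {f : K[X]} (hf : f ≠ 0) (j : ℕ) :
    lam χ ψ (f ^ j) = lam χ ψ f ^ j := by
  induction j with
  | zero => simp [lam_one]
  | succ j ih => rw [pow_succ, lam_mul χ ψ (pow_ne_zero _ hf) hf, ih, pow_succ]

noncomputable def a (χ ψ : MulChar K ℂ) (n : ℕ) : ℂ := ∑ f ∈ M K n, lam χ ψ f

theorem a_zero (χ ψ : MulChar K ℂ) : a χ ψ 0 = 1 := by
  have : M K 0 = {1} := by
    ext f
    rw [mem_M, mem_singleton]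
    constructor
    · rintro ⟨h1, h2⟩
      exact h1.natDegree_eq_zero.mp h2
    · rintro rfl
      simp
  simp [a, this, lam_one]

theorem a_one (χ ψ : MulChar K ℂ) : a χ ψ 1 = ∑ x : K, χ x * ψ (x + 1) := by
  symm
  refine Finset.sum_bij (fun x _ => X - C x) ?_ ?_ ?_ ?_
  · intro x _
    rw [mem_M]
    exact ⟨monic_X_sub_C x, natDegree_X_sub_C x⟩
  · intro x _ y _ h
    simpa using h
  · intro f hf
    rw [mem_M] at hf
    refine ⟨-f.coeff 0, mem_univ _, ?_⟩
    conv_rhs => rw [hf.1.eq_X_add_C hf.2]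
    simp
  · intro x _
    simp only [lam, natDegree_X_sub_C]
    congr 2 <;> simp <;> ring

theorem shift_sum (n : ℕ) (g : K[X] → ℂ) (h : K[X]) (hh : h.natDegree < n) :
    ∑ f ∈ M K n, g (f + h) = ∑ f ∈ M K n, g f := by
  have key : ∀ h : K[X], h.natDegree < n → ∀ f ∈ M K n, f + h ∈ M K n := by
    intro h hh f hf
    rw [mem_M] at hf ⊢
    have hd : h.degree < f.degree := degree_lt_degree (by rw [hf.2]; exact hh)
    exact ⟨hf.1.add_of_left hd, by rw [natDegree_add_eq_left_of_degree_lt hd, hf.2]⟩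
  refine Finset.sum_bij' (fun f _ => f + h) (fun f _ => f - h) (key h hh) ?_ ?_ ?_ ?_
  · intro f hf
    rw [sub_eq_add_neg]
    exact key (-h) (by simpa using hh) f hf
  · intros; simp
  · intros; simp
  · intros; simp

theorem sum_char_shift {χ : MulChar K ℂ} (hχ : χ ≠ 1) (u : K) (hu : u ≠ 0) (v : K) :
    ∑ c : K, χ (u * c + v) = 0 := by
  rw [← MulChar.sum_eq_zero_of_ne_one hχ]
  exact ((Equiv.mulLeft₀ u hu).trans (Equiv.addRight v)).sum_comp (fun x => χ x)

theorem a_ge_two {χ ψ : MulChar K ℂ} (h : (χ, ψ) ≠ (1, 1)) {n : ℕ} (hn : 2 ≤ n) :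
    a χ ψ n = 0 := by
  have hcard : (Fintype.card K : ℂ) ≠ 0 := by simp
  have hs : ((-1 : K) ^ n) ≠ 0 := by simp
  suffices hq : (Fintype.card K : ℂ) * a χ ψ n = 0 by
    exact (mul_eq_zero.mp hq).resolve_left hcard
  have red : ∀ t : K, (Fintype.card K : ℂ) * a χ ψ n =
      ∑ f ∈ M K n, ∑ c : K, lam χ ψ (f + C c * (X + C t)) := by
    intro t
    rw [Finset.sum_comm]
    have : ∀ c : K, ∑ f ∈ M K n, lam χ ψ (f + C c * (X + C t)) = a χ ψ n := by
      intro c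
      apply shift_sum n (lam χ ψ)
      refine lt_of_le_of_lt (natDegree_C_mul_le _ _) ?_
      rw [natDegree_X_add_C]; omega
    simp [this]
  have hdeg : ∀ t c : K, ∀ f ∈ M K n, (f + C c * (X + C t)).natDegree = n := by
    intro t c f hf
    rw [mem_M] at hf
    have hd : (C c * (X + C t)).natDegree < f.natDegree := by
      refine lt_of_le_of_lt (natDegree_C_mul_le _ _) ?_
      rw [natDegree_X_add_C, hf.2]; omega
    rw [natDegree_add_eq_left_of_natDegree_lt hd, hf.2]
  by_cases hχ : χ = 1
  · have hψ : ψ ≠ 1 := by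
      rintro rfl; exact h (by rw [hχ])
    rw [red 0]
    refine Finset.sum_eq_zero fun f hf => ?_
    have : ∀ c : K, lam χ ψ (f + C c * (X + C 0)) =
        χ ((-1) ^ n * f.eval 0) * ψ ((-(-1) ^ n) * c + (-1) ^ n * f.eval (-1)) := by
      intro c
      rw [lam, hdeg _ _ f hf]
      congr 2 <;> simp <;> ring
    simp_rw [this]
    rw [← Finset.mul_sum, sum_char_shift hψ _ (neg_ne_zero.mpr hs), mul_zero]
  · rw [red 1]
    refine Finset.sum_eq_zero fun f hf => ?_
    have : ∀ c : K, lam χ ψ (f + C c * (X + C 1)) =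
        χ (((-1) ^ n) * c + (-1) ^ n * f.eval 0) * ψ ((-1) ^ n * f.eval (-1)) := by
      intro c
      rw [lam, hdeg _ _ f hf]
      congr 2 <;> simp <;> ring
    simp_rw [this]
    rw [← Finset.sum_mul, sum_char_shift hχ _ hs, zero_mul]

open Classical in
theorem deg_eq {n N : ℕ} (hn : n ≤ N) {f : K[X]} (hf : f ∈ M K n) :
    ∑ P ∈ I K N, ∑ j ∈ Icc 1 N, (if P ^ j ∣ f then P.natDegree else 0) = n := by
  rw [mem_M] at hf
  obtain ⟨hm, hd⟩ := hf
  have hf0 : f ≠ 0 := hm.ne_zero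
  set s := UniqueFactorizationMonoid.normalizedFactors f with hs
  have hsm : ∀ P ∈ s, P.Monic ∧ Irreducible P ∧ P ∣ f := by
    intro P hP
    have h1 := UniqueFactorizationMonoid.irreducible_of_normalized_factor P hP
    refine ⟨?_, h1, UniqueFactorizationMonoid.dvd_of_mem_normalizedFactors hP⟩
    have h2 := UniqueFactorizationMonoid.normalize_normalized_factor P hP
    rw [← h2]
    exact Polynomial.monic_normalize h1.ne_zero
  have hprod : s.prod = f := by
    rw [hs, UniqueFactorizationMonoid.prod_normalizedFactors_eq hf0, hm.normalize_eq_self]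
  have hcount : ∀ P ∈ I K N, ∑ j ∈ Icc 1 N, (if P ^ j ∣ f then P.natDegree else 0)
      = s.count P • P.natDegree := by
    intro P hP
    rw [mem_I] at hP
    have hdv : ∀ j, P ^ j ∣ f ↔ j ≤ s.count P := by
      intro j
      rw [pow_dvd_iff_le_emultiplicity,
        UniqueFactorizationMonoid.emultiplicity_eq_count_normalizedFactors hP.2.1 hf0,
        hP.1.normalize_eq_self]
      exact Nat.cast_le
    have hle : s.count P ≤ N := by
      have h1 := natDegree_le_of_dvd ((hdv _).2 le_rfl) hf0
      rw [natDegree_pow] at h1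
      have h2 := hP.2.1.natDegree_pos
      nlinarith
    rw [← Finset.sum_filter]
    have : {j ∈ Icc 1 N | P ^ j ∣ f} = Icc 1 (s.count P) := by
      ext j
      simp only [mem_filter, mem_Icc, hdv]
      omega
    rw [this]
    simp
  rw [Finset.sum_congr rfl hcount]
  have hsub : s.toFinset ⊆ I K N := by
    intro P hP
    rw [Multiset.mem_toFinset] at hP
    obtain ⟨h1, h2, h3⟩ := hsm P hP
    rw [mem_I]
    exact ⟨h1, h2, (natDegree_le_of_dvd h3 hf0).trans (hd ▸ hn)⟩
  rw [← Finset.sum_subset hsub, ← Finset.sum_multiset_map_count,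
    ← natDegree_multiset_prod_of_monic _ (fun P hP => (hsm P hP).1), hprod, hd]
  intro P _ hP
  rw [Multiset.mem_toFinset] at hP
  rw [Multiset.count_eq_zero_of_notMem hP, zero_smul]

noncomputable def s (χ ψ : MulChar K ℂ) (N k : ℕ) : ℂ :=
  ∑ P ∈ I K N, ∑ j ∈ Icc 1 N,
    if j * P.natDegree = k then (P.natDegree : ℂ) * lam χ ψ P ^ j else 0

open Classical in
theorem sum_dvd (χ ψ : MulChar K ℂ) {Q : K[X]} (hQ : Q.Monic) (n : ℕ) :
    ∑ f ∈ M K n, (if Q ∣ f then lam χ ψ f else 0) =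
      if Q.natDegree ≤ n then lam χ ψ Q * a χ ψ (n - Q.natDegree) else 0 := by
  rw [← Finset.sum_filter]
  split_ifs with h
  · rw [a, Finset.mul_sum]
    symm
    refine Finset.sum_bij (fun g _ => Q * g) ?_ ?_ ?_ ?_
    · intro g hg
      rw [mem_M] at hg
      rw [mem_filter, mem_M]
      refine ⟨⟨hQ.mul hg.1, ?_⟩, dvd_mul_right _ _⟩
      rw [hQ.natDegree_mul hg.1, hg.2]; omega
    · intro g _ g' _ h
      exact mul_left_cancel₀ hQ.ne_zero h
    · intro f hf
      rw [mem_filter, mem_M] at hf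
      obtain ⟨⟨h1, h2⟩, g, rfl⟩ := hf
      have hg : g.Monic := hQ.of_mul_monic_left h1
      refine ⟨g, ?_, rfl⟩
      rw [mem_M]
      refine ⟨hg, ?_⟩
      rw [hQ.natDegree_mul hg] at h2; omega
    · intro g hg
      rw [mem_M] at hg
      rw [lam_mul χ ψ hQ.ne_zero hg.1.ne_zero]
  · refine Finset.sum_eq_zero fun f hf => ?_
    rw [mem_filter, mem_M] at hf
    exact absurd ((natDegree_le_of_dvd hf.2 hf.1.1.ne_zero).trans hf.1.2.le) h

open Classical in
theorem recur (χ ψ : MulChar K ℂ) {n N : ℕ} (hn : n ≤ N) :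
    (n : ℂ) * a χ ψ n = ∑ k ∈ Icc 1 n, s χ ψ N k * a χ ψ (n - k) := by
  have h1 : (n : ℂ) * a χ ψ n = ∑ f ∈ M K n, ∑ P ∈ I K N, ∑ j ∈ Icc 1 N,
      (P.natDegree : ℂ) * (if P ^ j ∣ f then lam χ ψ f else 0) := by
    rw [a, Finset.mul_sum]
    refine Finset.sum_congr rfl fun f hf => ?_
    conv_lhs => rw [← deg_eq hn hf]
    push_cast
    simp_rw [Finset.sum_mul]
    refine Finset.sum_congr rfl fun P _ => Finset.sum_congr rfl fun j _ => ?_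
    split_ifs <;> simp
  rw [h1, Finset.sum_comm]
  simp_rw [s, Finset.sum_mul]
  rw [Finset.sum_comm (s := Icc 1 n)]
  refine Finset.sum_congr rfl fun P hP => ?_
  rw [Finset.sum_comm, Finset.sum_comm (s := Icc 1 n)]
  refine Finset.sum_congr rfl fun j hj => ?_
  rw [mem_I] at hP
  rw [mem_Icc] at hj
  rw [← Finset.mul_sum, sum_dvd χ ψ (hP.1.pow j), natDegree_pow, lam_pow χ ψ hP.1.ne_zero]
  simp_rw [ite_mul, zero_mul]
  rw [Finset.sum_ite_eq]
  have := Nat.mul_pos hj.1 hP.2.1.natDegree_pos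
  simp only [mem_Icc]
  split_ifs with h2 h3 h3
  · ring
  · omega
  · omega
  · simp

theorem s_eq {χ ψ : MulChar K ℂ} (h : (χ, ψ) ≠ (1, 1)) {N : ℕ} (k : ℕ) (hk : k + 1 ≤ N) :
    s χ ψ N (k + 1) = (-1) ^ k * (∑ x : K, χ x * ψ (x + 1)) ^ (k + 1) := by
  induction k with
  | zero =>
    have := recur χ ψ hk
    simp [a_zero, a_one] at this
    simp [this]
  | succ k ih =>
    have h1 := recur χ ψ hk
    rw [a_ge_two h (by omega), mul_zero, Finset.sum_Icc_succ_top (by omega),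
      Finset.sum_Icc_succ_top (by omega), Finset.sum_eq_zero] at h1
    · rw [ih (by omega), Nat.sub_self, a_zero,
        show k + 1 + 1 - (k + 1) = 1 by omega, a_one] at h1
      linear_combination -h1
    · intro i hi
      rw [mem_Icc] at hi
      rw [a_ge_two h (by omega), mul_zero]

variable {F : Type*} [Field F] [Fintype F] [Algebra K F]

theorem norm_eq (x : F) (c : K) {j : ℕ} (hj : j * (minpoly K x).natDegree = Module.finrank K F) :
    Algebra.norm K (x + algebraMap K F c) =
      ((-1) ^ (minpoly K x).natDegree * (minpoly K x).eval (-c)) ^ j := by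
  have hcomp : minpoly K (x + algebraMap K F c) = (minpoly K x).comp (X - C c) :=
    minpoly.add_algebraMap x c
  have hdeg : (minpoly K (x + algebraMap K F c)).natDegree = (minpoly K x).natDegree := by
    rw [hcomp, natDegree_comp, natDegree_X_sub_C, mul_one]
  set y := x + algebraMap K F c
  have hy : IsIntegral K y := Algebra.IsIntegral.isIntegral y
  have hpos : 0 < (minpoly K x).natDegree := minpoly.natDegree_pos (Algebra.IsIntegral.isIntegral x)
  have hfin : Module.finrank (IntermediateField.adjoin K {y}) F = j := by
    have h1 := Module.finrank_mul_finrank K (IntermediateField.adjoin K {y}) F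
    rw [IntermediateField.adjoin.finrank hy, hdeg, ← hj, mul_comm] at h1
    exact Nat.eq_of_mul_eq_mul_right hpos h1
  rw [Algebra.norm_eq_norm_adjoin K y, hfin]
  congr 1
  have h2 := Algebra.PowerBasis.norm_gen_eq_coeff_zero_minpoly
    (IntermediateField.adjoin.powerBasis hy)
  rw [IntermediateField.adjoin.powerBasis_gen, IntermediateField.adjoin.powerBasis_dim,
    IntermediateField.minpoly_gen, hdeg] at h2
  rw [h2, hcomp, coeff_zero_eq_eval_zero, eval_comp]
  simp

open Classical in
theorem card_fiber {r : ℕ} (hr : r ≠ 0) (hF : Fintype.card F = Fintype.card K ^ r) {P : K[X]}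
    (hm : P.Monic) (hP : Irreducible P) (hd : P.natDegree ∣ r) :
    #{x : F | minpoly K x = P} = P.natDegree := by
  have hdv := hP.natDegree_dvd_iff_dvd_X_pow_card_pow_sub_X.1 hd
  rw [Nat.card_eq_fintype_card, ← hF] at hdv
  have hne : (X ^ Fintype.card F - X : F[X]) ≠ 0 :=
    FiniteField.X_pow_card_sub_X_ne_zero F Fintype.one_lt_card
  have hsp : (P.map (algebraMap K F)).Splits := by
    have h1 : (X ^ Fintype.card F - X : F[X]).Splits := by
      have := Polynomial.splits_X_pow_nat_card_sub_X (K := F)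
      rwa [Nat.card_eq_fintype_card] at this
    refine h1.of_dvd hne ?_
    simpa using Polynomial.map_dvd (algebraMap K F) hdv
  have := card_rootSet_eq_natDegree (K := F) (PerfectField.separable_of_irreducible hP) hsp
  rw [← this, ← Set.toFinset_card]
  congr 1
  ext x
  simp only [mem_filter, mem_univ, true_and, Set.mem_toFinset, mem_rootSet]
  constructor
  · rintro rfl
    exact ⟨hm.ne_zero, minpoly.aeval _ _⟩
  · rintro ⟨_, h⟩
    exact (minpoly.eq_of_irreducible_of_monic hP h hm).symm

open Classical in
theorem sum_eq_s (χ ψ : MulChar K ℂ) {r : ℕ} (hr : r ≠ 0)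
    (hF : Fintype.card F = Fintype.card K ^ r) :
    ∑ x : F, χ (Algebra.norm K x) * ψ (Algebra.norm K (x + 1)) = s χ ψ r r := by
  have hfr : Module.finrank K F = r := by
    have := Module.card_eq_pow_finrank (K := K) (V := F)
    rw [hF] at this
    exact (Nat.pow_right_injective Fintype.one_lt_card this).symm
  have hint : ∀ x : F, IsIntegral K x := fun x => Algebra.IsIntegral.isIntegral x
  have hmap : ∀ x ∈ (univ : Finset F), minpoly K x ∈ I K r := by
    intro x _
    rw [mem_I]
    refine ⟨minpoly.monic (hint x), minpoly.irreducible (hint x), ?_⟩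
    rw [← hfr]
    exact minpoly.natDegree_le x
  rw [← Finset.sum_fiberwise_of_maps_to hmap, s]
  refine Finset.sum_congr rfl fun P hP => ?_
  rw [mem_I] at hP
  by_cases hd : P.natDegree ∣ r
  · obtain ⟨j, hj⟩ := hd
    have hpos := hP.2.1.natDegree_pos
    have hterm : ∀ x ∈ ({x : F | minpoly K x = P} : Finset F),
        χ (Algebra.norm K x) * ψ (Algebra.norm K (x + 1)) = lam χ ψ P ^ j := by
      intro x hx
      rw [mem_filter] at hx
      have hj' : j * (minpoly K x).natDegree = Module.finrank K F := by
        rw [hx.2, hfr, hj, mul_comm]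
      have e0 := norm_eq x 0 hj'
      have e1 := norm_eq x 1 hj'
      rw [map_zero, add_zero, neg_zero] at e0
      rw [map_one] at e1
      rw [e0, e1, hx.2, lam, map_pow, map_pow, mul_pow]
    rw [Finset.sum_congr rfl hterm, Finset.sum_const,
      card_fiber hr hF hP.1 hP.2.1 ⟨j, hj⟩, nsmul_eq_mul]
    have hjj : ∀ i, i * P.natDegree = r ↔ i = j := by
      intro i
      rw [hj, mul_comm P.natDegree]
      exact ⟨fun h => Nat.eq_of_mul_eq_mul_right hpos h, fun h => by rw [h]⟩
    simp_rw [hjj]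
    rw [Finset.sum_ite_eq', if_pos]
    rw [mem_Icc]
    have : j ≠ 0 := by rintro rfl; exact hr (by simpa using hj)
    refine ⟨by omega, ?_⟩
    rw [hj]; nlinarith
  · rw [Finset.sum_eq_zero, Finset.sum_eq_zero]
    · intro j _
      rw [if_neg]
      rintro h
      exact hd ⟨j, by rw [← h, mul_comm]⟩
    · intro x hx
      rw [mem_filter] at hx
      exact absurd (hx.2 ▸ hfr ▸ minpoly.degree_dvd (hint x)) hd

theorem triv_sum (L : Type*) [Field L] [Fintype L] (g : L → ℂ) (h0 : g 0 = 0)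
    (h1 : ∀ x, x ≠ 0 → g x = 1) :
    ∑ x : L, g x * g (x + 1) = (Fintype.card L : ℂ) - 2 := by
  classical
  have : ∀ x : L, g x * g (x + 1) = 1 - (if x = 0 then 1 else 0) - (if x = -1 then 1 else 0) := by
    intro x
    by_cases hx : x = 0
    · simp [hx, h0]
    · by_cases hx' : x = -1
      · simp [hx', h0]
      · have : x + 1 ≠ 0 := fun h => hx' (eq_neg_of_add_eq_zero_left h)
        simp [hx, hx', h1 x hx, h1 _ this]
  simp_rw [this, Finset.sum_sub_distrib]
  simp
  ring

end JacNorm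

/-- Comparison between Jacobi sums over `𝔽_{q^r}` of norm-lifted characters and Jacobi sums
over `𝔽_q`: if `χ = ψ = 1` then `J_{𝔽_{q^r}}(χ∘N, ψ∘N) = q^r - 2` and
`J_{𝔽_q}(χ,ψ)^r = (q-2)^r`; otherwise `J_{𝔽_{q^r}}(χ∘N, ψ∘N) = (-1)^{r-1} J_{𝔽_q}(χ,ψ)^r`.
Here `J_F(χ,ψ) = ∑_{x ∈ F} χ(x) ψ(x+1)` and `N` is the field norm. -/
theorem jacobiSum_norm_comparison {p n q r : ℕ} (hp : p.Prime) (hn : 1 ≤ n) (hq : q = p ^ n)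
    (hr : 2 ≤ r)
    {K F : Type*} [Field K] [Field F] [Fintype K] [Fintype F] [Algebra K F]
    (hK : Fintype.card K = q) (hF : Fintype.card F = q ^ r)
    (χ ψ : MulChar K ℂ) :
    ((χ, ψ) = (1, 1) →
      (∑ x : F, χ (Algebra.norm K x) * ψ (Algebra.norm K (x + 1))) = (q : ℂ) ^ r - 2 ∧
      (∑ x : K, χ x * ψ (x + 1)) ^ r = ((q : ℂ) - 2) ^ r) ∧
    ((χ, ψ) ≠ (1, 1) →
      (∑ x : F, χ (Algebra.norm K x) * ψ (Algebra.norm K (x + 1))) =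
        (-1 : ℂ) ^ (r - 1) * (∑ x : K, χ x * ψ (x + 1)) ^ r) := by
  have hF' : Fintype.card F = Fintype.card K ^ r := by rw [hF, hK]
  constructor
  · intro h
    obtain ⟨rfl, rfl⟩ := Prod.mk.inj h
    constructor
    · have := JacNorm.triv_sum F (fun x => (1 : MulChar K ℂ) (Algebra.norm K x))
        (by rw [Algebra.norm_zero]; exact MulChar.map_zero _)
        (fun x hx => MulChar.one_apply (isUnit_iff_ne_zero.mpr (Algebra.norm_ne_zero_iff.mpr hx)))
      rw [hF] at this
      push_cast at this
      exact this
    · have := JacNorm.triv_sum K (fun x => (1 : MulChar K ℂ) x)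
        (MulChar.map_zero _)
        (fun x hx => MulChar.one_apply (isUnit_iff_ne_zero.mpr hx))
      rw [hK] at this
      rw [this]
  · intro h
    obtain ⟨k, rfl⟩ : ∃ k, r = k + 1 := ⟨r - 1, by omega⟩
    rw [JacNorm.sum_eq_s χ ψ (by omega) hF', JacNorm.s_eq h k le_rfl, Nat.add_sub_cancel]
end

section
/- Let q = p^n be a prime power, r ≥ 2 an integer, and u, v ∈ 𝔽_q^×. For multiplicative characters χ, ψ of 𝔽_q^×, write χ̃ = χ∘N and ψ̃ = ψ∘N where N = N_{𝔽_{q^r}/𝔽_q} is the field norm. Then Σ_{χ,ψ} χ(u^{−1}) ψ(v^{−1}) J_{𝔽_{q^r}}(χ̃,ψ̃) = q^r − 2 + (−1)^{r−1} ( Σ_{χ,ψ} χ(u^{−1}) ψ(v^{−1}) J_{𝔽_q}(χ,ψ)^r − (q−2)^r ), where both sums run over all pairs of multiplicative characters of 𝔽_q^×. -/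
set_option linter.unusedSectionVars false
noncomputable section
open Polynomial Finset
namespace HD
variable {K : Type*} [Field K] [Fintype K]

lemma mon_finite (d : ℕ) : {f : K[X] | f.Monic ∧ f.natDegree = d}.Finite := by
  have e := (monicEquivDegreeLT (R := K) d).trans (degreeLTEquiv K d).toEquiv
  exact Finite.of_equiv _ e.symm

def mon (K : Type*) [Field K] [Fintype K] (d : ℕ) : Finset K[X] := (mon_finite (K := K) d).toFinset

lemma mem_mon {d : ℕ} {f : K[X]} : f ∈ mon K d ↔ f.Monic ∧ f.natDegree = d := by
  simp [mon]

def lam (χ ψ : MulChar K ℂ) (f : K[X]) : ℂ :=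
  χ ((-1) ^ f.natDegree * f.eval 0) * ψ ((-1) ^ f.natDegree * f.eval (-1))

lemma lam_one (χ ψ : MulChar K ℂ) : lam χ ψ 1 = 1 := by simp [lam]

lemma lam_mul (χ ψ : MulChar K ℂ) {f g : K[X]} (hf : f.Monic) (hg : g.Monic) :
    lam χ ψ (f * g) = lam χ ψ f * lam χ ψ g := by
  simp only [lam, hf.natDegree_mul hg, eval_mul, pow_add, map_mul]
  ring

lemma lam_pow (χ ψ : MulChar K ℂ) {f : K[X]} (hf : f.Monic) (k : ℕ) :
    lam χ ψ (f ^ k) = lam χ ψ f ^ k := by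
  induction k with
  | zero => simp [lam_one]
  | succ k ih => rw [pow_succ, lam_mul _ _ (hf.pow k) hf, ih, pow_succ]

def S (χ ψ : MulChar K ℂ) (d : ℕ) : ℂ := ∑ f ∈ mon K d, lam χ ψ f

lemma S_zero (χ ψ : MulChar K ℂ) : S χ ψ 0 = 1 := by
  have : mon K 0 = {1} := by
    ext f; rw [mem_mon, mem_singleton]
    constructor
    · rintro ⟨h, h'⟩; exact h.natDegree_eq_zero.1 h'
    · rintro rfl; simp
  rw [S, this]; simp [lam_one]

lemma S_one (χ ψ : MulChar K ℂ) : S χ ψ 1 = ∑ x : K, χ x * ψ (x + 1) := by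
  symm
  unfold S
  refine Finset.sum_bij (fun a _ => X - C a) ?_ ?_ ?_ ?_
  · intro a _; simp [mem_mon, monic_X_sub_C]
  · intro a _ b _ h; simpa using h
  · intro f hf
    rw [mem_mon] at hf
    refine ⟨-f.coeff 0, mem_univ _, ?_⟩
    rw [hf.1.eq_X_add_C hf.2]; simp
  · intro a _
    simp [lam]

lemma mon_shift {d : ℕ} (g : K[X]) (hg : g.natDegree < d) (F : K[X] → ℂ) :
    ∑ f ∈ mon K d, F (f + g) = ∑ f ∈ mon K d, F f := by
  have key : ∀ g : K[X], g.natDegree < d → ∀ f ∈ mon K d, f + g ∈ mon K d := by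
    intro g hg f hf
    rw [mem_mon] at *
    have h1 : g.natDegree < f.natDegree := by rw [hf.2]; exact hg
    exact ⟨hf.1.add_of_left (degree_lt_degree h1), by
      rw [natDegree_add_eq_left_of_natDegree_lt h1, hf.2]⟩
  refine Finset.sum_nbij' (fun f => f + g) (fun f => f - g) (key g hg) ?_ ?_ ?_ ?_
  · intro f hf
    simpa [sub_eq_add_neg] using key (-g) (by simpa using hg) f hf
  · intros; simp
  · intros; simp
  · intros; simp

lemma sum_affine (χ : MulChar K ℂ) (hχ : χ ≠ 1) (d : ℕ) (a : K) :
    ∑ b : K, χ ((-1) ^ d * (a + b)) = 0 := by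
  have h0 := MulChar.sum_eq_zero_of_ne_one hχ
  simp only [map_mul]
  rw [← Finset.mul_sum, show ∑ b : K, χ (a + b) = ∑ b, χ b from
    Equiv.sum_comp (Equiv.addLeft a) (fun b => χ b), h0, mul_zero]

lemma S_ge (χ ψ : MulChar K ℂ) (h : ¬ (χ = 1 ∧ ψ = 1)) {d : ℕ} (hd : 2 ≤ d) : S χ ψ d = 0 := by
  have hc : (Fintype.card K : ℂ) ≠ 0 := by simp
  have main : ∀ g : K[X], g.natDegree ≤ 1 →
      (∀ f ∈ mon K d, ∑ b : K, lam χ ψ (f + C b * g) = 0) → S χ ψ d = 0 := by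
    intro g hg hz
    have : (Fintype.card K : ℂ) * S χ ψ d = 0 := by
      calc (Fintype.card K : ℂ) * S χ ψ d = ∑ b : K, S χ ψ d := by simp
        _ = ∑ b : K, ∑ f ∈ mon K d, lam χ ψ (f + C b * g) := by
          refine Finset.sum_congr rfl fun b _ => ?_
          rw [S, mon_shift]
          exact ((natDegree_C_mul_le b g).trans hg).trans_lt (by omega)
        _ = 0 := by
          rw [Finset.sum_comm]
          exact Finset.sum_eq_zero hz
    exact (mul_eq_zero.1 this).resolve_left hc
  have deg : ∀ f ∈ mon K d, ∀ g : K[X], g.natDegree ≤ 1 → ∀ b, (f + C b * g).natDegree = d := by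
    intro f hf g hg b
    rw [mem_mon] at hf
    rw [natDegree_add_eq_left_of_natDegree_lt, hf.2]
    rw [hf.2]
    exact ((natDegree_C_mul_le b g).trans hg).trans_lt (by omega)
  by_cases hχ : χ = 1
  · have hψ : ψ ≠ 1 := fun h' => h ⟨hχ, h'⟩
    have h1 : (-X : K[X]).natDegree ≤ 1 := by simp
    refine main (-X) h1 fun f hf => ?_
    simp only [lam, deg f hf _ h1]
    simp only [eval_add, eval_mul, eval_C, eval_neg, eval_X, neg_neg, mul_one, neg_zero, mul_zero, add_zero]
    rw [← Finset.mul_sum, sum_affine ψ hψ, mul_zero]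
  · have h1 : (X + 1 : K[X]).natDegree ≤ 1 := by
      simpa using (natDegree_X_add_C (1 : K)).le
    refine main (X + 1) h1 fun f hf => ?_
    simp only [lam, deg f hf _ h1]
    simp only [eval_add, eval_mul, eval_C, eval_X, eval_one, zero_add, neg_add_cancel, mul_one, mul_zero, add_zero]
    rw [← Finset.sum_mul, sum_affine χ hχ, zero_mul]

open Classical in
def irr (K : Type*) [Field K] [Fintype K] (D : ℕ) : Finset K[X] :=
  ((range (D + 1)).biUnion (mon K)).filter Irreducible

lemma mem_irr {D : ℕ} {P : K[X]} :
    P ∈ irr K D ↔ P.Monic ∧ Irreducible P ∧ P.natDegree ≤ D := by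
  classical
  simp only [irr, mem_filter, mem_biUnion, mem_range, mem_mon]
  constructor
  · rintro ⟨⟨a, h, h1, h2⟩, h3⟩
    exact ⟨h1, h3, by omega⟩
  · rintro ⟨h1, h3, h⟩
    exact ⟨⟨_, Nat.lt_succ_of_le h, h1, rfl⟩, h3⟩

open Classical in
lemma deg_eq {D : ℕ} {f : K[X]} (hf : f.Monic) (hD : f.natDegree ≤ D) :
    f.natDegree = ∑ P ∈ irr K D, ∑ k ∈ Icc 1 D, if P ^ k ∣ f then P.natDegree else 0 := by
  have h0 : f ≠ 0 := hf.ne_zero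
  set m := UniqueFactorizationMonoid.normalizedFactors f with hm
  have hmem : ∀ P, P ∈ m ↔ Irreducible P ∧ P.Monic ∧ P ∣ f := fun P =>
    Polynomial.mem_normalizedFactors_iff h0
  have hprod : m.prod = f := by
    have := leadingCoeff_mul_prod_normalizedFactors f
    rwa [hf.leadingCoeff, C_1, one_mul] at this
  have hdeg : f.natDegree = (m.map natDegree).sum := by
    conv_lhs => rw [← hprod]
    exact natDegree_multiset_prod_of_monic _ fun P hP => ((hmem P).1 hP).2.1
  have hsub : m.toFinset ⊆ irr K D := by
    intro P hP
    rw [Multiset.mem_toFinset, hmem] at hP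
    exact mem_irr.2 ⟨hP.2.1, hP.1, (natDegree_le_of_dvd hP.2.2 h0).trans hD⟩
  rw [hdeg, Finset.sum_multiset_map_count]
  rw [Finset.sum_subset hsub (by
    intro P _ hP
    rw [Multiset.mem_toFinset] at hP
    simp [Multiset.count_eq_zero_of_notMem hP])]
  refine Finset.sum_congr rfl fun P hP => ?_
  obtain ⟨hPm, hPi, hPd⟩ := mem_irr.1 hP
  have hiff : ∀ k : ℕ, P ^ k ∣ f ↔ k ≤ m.count P := by
    intro k
    rw [pow_dvd_iff_le_emultiplicity,
      UniqueFactorizationMonoid.le_emultiplicity_iff_replicate_le_normalizedFactors hPi h0,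
      hPm.normalize_eq_self, Multiset.le_count_iff_replicate_le]
  have hle : m.count P ≤ D := by
    have h1 := natDegree_le_of_dvd ((hiff _).2 le_rfl) h0
    rw [natDegree_pow] at h1
    have := hPi.natDegree_pos
    nlinarith
  rw [← Finset.sum_filter, Finset.sum_const]
  congr 1
  have : (Icc 1 D).filter (fun k => P ^ k ∣ f) = Icc 1 (m.count P) := by
    ext k; simp only [mem_filter, mem_Icc, hiff]; omega
  rw [this]; simp

def Jp (χ ψ : MulChar K ℂ) (D s : ℕ) : ℂ :=
  ∑ P ∈ irr K D, ∑ k ∈ Icc 1 D,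
    if k * P.natDegree = s then (P.natDegree : ℂ) * lam χ ψ P ^ k else 0

open Classical in
lemma inner_sum (χ ψ : MulChar K ℂ) {P : K[X]} (hP : P.Monic) (d k : ℕ) :
    (∑ f ∈ mon K d, if P ^ k ∣ f then (P.natDegree : ℂ) * lam χ ψ f else 0) =
      if k * P.natDegree ≤ d then
        (P.natDegree : ℂ) * lam χ ψ P ^ k * S χ ψ (d - k * P.natDegree) else 0 := by
  have hPk := hP.pow k
  have hdk : (P ^ k).natDegree = k * P.natDegree := natDegree_pow _ _
  split_ifs with h
  · rw [← Finset.sum_filter, S, Finset.mul_sum]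
    symm
    refine Finset.sum_bij (fun g _ => P ^ k * g) ?_ ?_ ?_ ?_
    · intro g hg
      rw [mem_mon] at hg
      rw [mem_filter, mem_mon]
      refine ⟨⟨hPk.mul hg.1, ?_⟩, dvd_mul_right _ _⟩
      rw [hPk.natDegree_mul hg.1, hdk, hg.2]; omega
    · intro a _ b _ hab
      exact mul_left_cancel₀ hPk.ne_zero hab
    · intro f hf
      rw [mem_filter, mem_mon] at hf
      obtain ⟨⟨hf1, hf2⟩, g, rfl⟩ := hf
      have hg := hPk.of_mul_monic_left hf1
      refine ⟨g, ?_, rfl⟩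
      rw [hPk.natDegree_mul hg, hdk] at hf2
      rw [mem_mon]
      exact ⟨hg, by omega⟩
    · intro g hg
      rw [mem_mon] at hg
      rw [lam_mul _ _ hPk hg.1, lam_pow _ _ hP]; ring
  · refine Finset.sum_eq_zero fun f hf => ?_
    rw [mem_mon] at hf
    rw [if_neg]
    intro hd
    have := natDegree_le_of_dvd hd hf.1.ne_zero
    omega

lemma rec (χ ψ : MulChar K ℂ) {D d : ℕ} (hd : d ≤ D) :
    (d : ℂ) * S χ ψ d = ∑ s ∈ Icc 1 d, Jp χ ψ D s * S χ ψ (d - s) := by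
  classical
  have h1 : (d : ℂ) * S χ ψ d = ∑ f ∈ mon K d, ∑ P ∈ irr K D, ∑ k ∈ Icc 1 D,
      if P ^ k ∣ f then (P.natDegree : ℂ) * lam χ ψ f else 0 := by
    rw [S, Finset.mul_sum]
    refine Finset.sum_congr rfl fun f hf => ?_
    rw [mem_mon] at hf
    have := deg_eq hf.1 (hf.2.le.trans hd)
    rw [hf.2] at this
    rw [this]
    push_cast
    simp only [Finset.sum_mul, ite_mul, zero_mul]
  rw [h1, Finset.sum_comm]
  simp only [Jp, Finset.sum_mul]
  rw [Finset.sum_comm (s := Icc 1 d)]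
  refine Finset.sum_congr rfl fun P hP => ?_
  obtain ⟨hPm, hPi, hPd⟩ := mem_irr.1 hP
  rw [Finset.sum_comm, Finset.sum_comm (s := Icc 1 d)]
  refine Finset.sum_congr rfl fun k hk => ?_
  rw [inner_sum χ ψ hPm]
  simp only [ite_mul, zero_mul]
  rw [Finset.sum_ite_eq]
  have := Nat.mul_pos (mem_Icc.1 hk).1 hPi.natDegree_pos
  simp only [mem_Icc, Nat.succ_le_of_lt this, true_and]

lemma Jp_eq (χ ψ : MulChar K ℂ) (h : ¬ (χ = 1 ∧ ψ = 1)) {D : ℕ} (d : ℕ) (hd : d + 1 ≤ D) :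
    Jp χ ψ D (d + 1) = (-1) ^ d * S χ ψ 1 ^ (d + 1) := by
  induction d with
  | zero =>
    have := rec χ ψ hd
    simp [S_zero] at this
    simp [this]
  | succ d ih =>
    have h1 := rec χ ψ hd
    rw [S_ge χ ψ h (by omega), mul_zero, Finset.sum_Icc_succ_top (by omega),
      Finset.sum_Icc_succ_top (by omega), Finset.sum_eq_zero, Nat.sub_self, S_zero,
      ih (by omega)] at h1
    · have : d + 1 + 1 - (d + 1) = 1 := by omega
      rw [this] at h1
      linear_combination -h1
    · intro s hs
      rw [mem_Icc] at hs
      rw [S_ge χ ψ h (by omega), mul_zero]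

variable {F : Type*} [Field F] [Fintype F] [Algebra K F]

lemma norm_eq (x : F) : ∃ k, k * (minpoly K x).natDegree = Module.finrank K F ∧
    ∀ a : K, Algebra.norm K (x + algebraMap K F a) =
      ((-1) ^ (minpoly K x).natDegree * (minpoly K x).eval (-a)) ^ k := by
  have key : ∀ y : F, Algebra.norm K y = ((-1) ^ (minpoly K y).natDegree * (minpoly K y).eval 0) ^
      (Module.finrank K F / (minpoly K y).natDegree) := by
    intro y
    have hi : IsIntegral K y := Algebra.IsIntegral.isIntegral y
    have hfr := IntermediateField.adjoin.finrank hi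
    rw [Algebra.norm_eq_norm_adjoin K y, ← IntermediateField.adjoin.powerBasis_gen hi,
      Algebra.PowerBasis.norm_gen_eq_coeff_zero_minpoly, IntermediateField.adjoin.powerBasis_gen hi,
      IntermediateField.minpoly_gen, IntermediateField.adjoin.powerBasis_dim, coeff_zero_eq_eval_zero]
    congr 1
    rw [← Module.finrank_mul_finrank K (IntermediateField.adjoin K {y}) F, hfr,
      Nat.mul_div_cancel_left _ (minpoly.natDegree_pos hi)]
  refine ⟨Module.finrank K F / (minpoly K x).natDegree, Nat.div_mul_cancel ?_, fun a => ?_⟩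
  · exact minpoly.degree_dvd (Algebra.IsIntegral.isIntegral x)
  · rw [key, minpoly.add_algebraMap, natDegree_comp]
    simp

lemma Jp_norm (χ ψ : MulChar K ℂ) {r : ℕ} (hr : Module.finrank K F = r) (hr0 : 0 < r) :
    ∑ x : F, χ (Algebra.norm K x) * ψ (Algebra.norm K (x + 1)) = Jp χ ψ r r := by
  classical
  have hint : ∀ x : F, IsIntegral K x := fun x => Algebra.IsIntegral.isIntegral x
  have hmap : ∀ x ∈ (univ : Finset F), minpoly K x ∈ irr K r := by
    intro x _
    refine mem_irr.2 ⟨minpoly.monic (hint x), minpoly.irreducible (hint x), ?_⟩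
    exact hr ▸ minpoly.natDegree_le x
  rw [← Finset.sum_fiberwise_of_maps_to hmap, Jp]
  refine Finset.sum_congr rfl fun P hP => ?_
  obtain ⟨hPm, hPi, hPd⟩ := mem_irr.1 hP
  by_cases hdvd : P.natDegree ∣ r
  · obtain ⟨k, hk⟩ := hdvd
    have hpos := hPi.natDegree_pos
    have hk' : ∀ j, j * P.natDegree = r ↔ k = j := by
      intro j
      rw [hk, mul_comm]
      constructor
      · intro h; exact (Nat.eq_of_mul_eq_mul_left hpos h).symm
      · rintro rfl; rfl
    simp only [hk']
    rw [Finset.sum_ite_eq, if_pos (by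
      rw [mem_Icc]
      constructor
      · rcases Nat.eq_zero_or_pos k with h | h
        · subst h; omega
        · exact h
      · rw [hk]; exact Nat.le_mul_of_pos_left _ hpos)]
    have hval : ∀ x ∈ (univ : Finset F).filter (fun x => minpoly K x = P),
        χ (Algebra.norm K x) * ψ (Algebra.norm K (x + 1)) = lam χ ψ P ^ k := by
      intro x hx
      rw [mem_filter] at hx
      obtain ⟨j, hj, hn⟩ := norm_eq (K := K) x
      rw [hx.2] at hn hj
      rw [hr, hk'] at hj
      subst hj
      have h0 := hn 0
      have h1 := hn 1
      simp only [map_zero, add_zero, neg_zero, map_one] at h0 h1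
      rw [h0, h1, lam, map_pow, map_pow, mul_pow]
    rw [Finset.sum_congr rfl hval, Finset.sum_const, nsmul_eq_mul]
    congr 2
    have hfil : (univ : Finset F).filter (fun x => minpoly K x = P) = (P.rootSet F).toFinset := by
      ext x
      rw [mem_filter, Set.mem_toFinset, mem_rootSet_of_ne hPm.ne_zero]
      constructor
      · rintro ⟨-, rfl⟩; exact minpoly.aeval K x
      · intro h; exact ⟨mem_univ _, (minpoly.eq_of_irreducible_of_monic hPi h hPm).symm⟩
    rw [hfil, Set.toFinset_card]
    refine card_rootSet_eq_natDegree (PerfectField.separable_of_irreducible hPi) ?_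
    have h2 := (hPi.natDegree_dvd_iff_dvd_X_pow_card_pow_sub_X (n := r)).1 ⟨k, hk⟩
    have h3 : Nat.card K ^ r = Nat.card F := by
      rw [Module.natCard_eq_pow_finrank (K := K) (V := F), hr]
    rw [h3] at h2
    have h4 : (map (algebraMap K F) (X ^ Nat.card F - X)).Splits := by
      simpa using Polynomial.splits_X_pow_nat_card_sub_X (K := F)
    refine h4.of_dvd ?_ (Polynomial.map_dvd _ h2)
    rw [Polynomial.map_sub, Polynomial.map_pow, map_X]
    exact FiniteField.X_pow_card_sub_X_ne_zero F Finite.one_lt_card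
  · rw [Finset.sum_eq_zero, Finset.sum_eq_zero]
    · intro k _
      rw [if_neg]
      intro h; exact hdvd ⟨k, by rw [← h, mul_comm]⟩
    · intro x hx
      rw [mem_filter] at hx
      exact absurd (hr ▸ hx.2 ▸ minpoly.degree_dvd (hint x)) hdvd

lemma HD_main (χ ψ : MulChar K ℂ) (h : ¬ (χ = 1 ∧ ψ = 1)) {r : ℕ} (hr : Module.finrank K F = r)
    (hr0 : 0 < r) :
    ∑ x : F, χ (Algebra.norm K x) * ψ (Algebra.norm K (x + 1)) =
      (-1) ^ (r - 1) * (∑ x : K, χ x * ψ (x + 1)) ^ r := by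
  rw [Jp_norm χ ψ hr hr0, ← S_one]
  obtain ⟨d, rfl⟩ : ∃ d, r = d + 1 := ⟨r - 1, by omega⟩
  exact Jp_eq χ ψ h d le_rfl

lemma triv_sum : ∑ x : F, (1 : MulChar K ℂ) (Algebra.norm K x) *
    (1 : MulChar K ℂ) (Algebra.norm K (x + 1)) = (Fintype.card F : ℂ) - 2 := by
  classical
  have h : ∀ y : F, (1 : MulChar K ℂ) (Algebra.norm K y) = if y = 0 then 0 else 1 := by
    intro y
    split_ifs with hy
    · subst hy; rw [Algebra.norm_zero]; exact MulChar.map_zero _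
    · exact MulChar.one_apply (Ne.isUnit (Algebra.norm_ne_zero_iff.2 hy))
  have h2 : ∀ x : F, (1 : MulChar K ℂ) (Algebra.norm K x) *
    (1 : MulChar K ℂ) (Algebra.norm K (x + 1)) =
      1 - (if x = 0 then 1 else 0) - (if x = -1 then 1 else 0) := by
    intro x
    rw [h, h]
    by_cases hx : x = 0
    · subst hx; simp
    · by_cases hx1 : x = -1
      · subst hx1; simp
      · have : x + 1 ≠ 0 := fun h => hx1 (eq_neg_of_add_eq_zero_left h)
        simp [hx, hx1, this]
  simp only [h2, Finset.sum_sub_distrib, Finset.sum_ite_eq', mem_univ, if_true]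
  simp
  ring

end HD
end



/-- Weighted comparison of Jacobi sums: for `u, v ∈ 𝔽_q^×`,
`∑_{χ,ψ} χ(u⁻¹) ψ(v⁻¹) J_{𝔽_{q^r}}(χ∘N, ψ∘N)
  = q^r - 2 + (-1)^{r-1} (∑_{χ,ψ} χ(u⁻¹) ψ(v⁻¹) J_{𝔽_q}(χ,ψ)^r - (q-2)^r)`,
where `J_F(χ,ψ) = ∑_{x ∈ F} χ(x) ψ(x+1)` and `N` is the field norm. -/
theorem weighted_jacobiSum_norm_comparison {p n q r : ℕ} (hp : p.Prime) (hn : 1 ≤ n)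
    (hq : q = p ^ n) (hr : 2 ≤ r)
    {K F : Type*} [Field K] [Field F] [Fintype K] [Fintype F] [Algebra K F]
    (hK : Fintype.card K = q) (hF : Fintype.card F = q ^ r)
    (u v : Kˣ) [Fintype (MulChar K ℂ)] :
    (∑ χ : MulChar K ℂ, ∑ ψ : MulChar K ℂ,
        χ ((u : K)⁻¹) * ψ ((v : K)⁻¹) *
          ∑ x : F, χ (Algebra.norm K x) * ψ (Algebra.norm K (x + 1))) =
      (q : ℂ) ^ r - 2 + (-1 : ℂ) ^ (r - 1) *
        ((∑ χ : MulChar K ℂ, ∑ ψ : MulChar K ℂ,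
            χ ((u : K)⁻¹) * ψ ((v : K)⁻¹) * (∑ x : K, χ x * ψ (x + 1)) ^ r) -
          ((q : ℂ) - 2) ^ r) := by
  classical
  have hfin : Module.finrank K F = r := by
    have h1 : Fintype.card F = Fintype.card K ^ Module.finrank K F :=
      Module.card_eq_pow_finrank
    rw [hF, hK] at h1
    have hq1 : 1 < q := hK ▸ Fintype.one_lt_card
    exact (Nat.pow_right_injective hq1 h1).symm
  have hKT : ∑ x : K, (1 : MulChar K ℂ) x * (1 : MulChar K ℂ) (x + 1) = (q : ℂ) - 2 := by
    have := HD.triv_sum (K := K) (F := K)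
    rw [hK] at this
    simpa [Algebra.norm_self] using this
  have hFT := HD.triv_sum (K := K) (F := F)
  rw [hF] at hFT
  push_cast at hFT
  have hone : ∀ w : Kˣ, (1 : MulChar K ℂ) ((w : K)⁻¹) = 1 := fun w =>
    MulChar.one_apply (Ne.isUnit (inv_ne_zero w.ne_zero))
  have hterm : ∀ χ ψ : MulChar K ℂ, χ ((u : K)⁻¹) * ψ ((v : K)⁻¹) *
          ∑ x : F, χ (Algebra.norm K x) * ψ (Algebra.norm K (x + 1)) =
      (-1 : ℂ) ^ (r - 1) * (χ ((u : K)⁻¹) * ψ ((v : K)⁻¹) * (∑ x : K, χ x * ψ (x + 1)) ^ r) +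
      (if χ = 1 then (if ψ = 1 then
        ((q : ℂ) ^ r - 2 - (-1 : ℂ) ^ (r - 1) * ((q : ℂ) - 2) ^ r) else 0) else 0) := by
    intro χ ψ
    by_cases h : χ = 1 ∧ ψ = 1
    · obtain ⟨rfl, rfl⟩ := h
      rw [hFT, hKT, hone, hone, if_pos rfl, if_pos rfl]
      ring
    · rw [HD.HD_main χ ψ h hfin (by omega)]
      have : (if χ = 1 then (if ψ = 1 then
        ((q : ℂ) ^ r - 2 - (-1 : ℂ) ^ (r - 1) * ((q : ℂ) - 2) ^ r) else 0) else 0) = 0 := by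
        split_ifs with h1 h2
        · exact absurd ⟨h1, h2⟩ h
        · rfl
        · rfl
      rw [this]
      ring
  simp only [hterm, Finset.sum_add_distrib, ← Finset.mul_sum]
  simp only [Finset.sum_ite_irrel, Finset.sum_const_zero, Finset.sum_ite_eq', Finset.sum_ite_eq,
    Finset.mem_univ, if_true]
  ring
end

section
/- Let q = p^n be a prime power, r ≥ 2 an integer, k = (q^r − 1)/(q − 1), and 0 ≤ a,b ≤ q−2. Define A_r(a) = −(q−2) if either (r is even and a = 0), or (r is odd, q is even, and a = 0), or (r is odd, q is odd, and a = (q−1)/2), and A_r(a) = 1 otherwise; B(b) = −(q−2) if b = 0 and B(b) = 1 otherwise; C(a,b) = −(q−2) if a = b and C(a,b) = 1 otherwise. Set M_{a,b} = (q^r − 2 + A_r(a) + B(b) + C(a,b))/(q−1)^2. Then |(a,b)_{q−1} − M_{a,b}| ≤ ((q−2)(q−3)/(q−1)^2) · q^{r/2}. -/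
namespace CycAux
open Finset

variable {F : Type*} [Field F] [Fintype F]

noncomputable instance instFtG (χ : MulChar F ℂ) : Fintype (Subgroup.zpowers χ) :=
  Fintype.ofFinite _

open Classical in
lemma sum_G (χ : MulChar F ℂ) {e : ℕ} (he : orderOf χ = e) (u : F) (hu : u ≠ 0) :
    ∑ ψ : Subgroup.zpowers χ, (ψ : MulChar F ℂ) u = if χ u = 1 then (e : ℂ) else 0 := by
  split_ifs with h
  · have : ∀ ψ : Subgroup.zpowers χ, (ψ : MulChar F ℂ) u = 1 := by
      rintro ⟨ψ, hψ⟩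
      obtain ⟨m, rfl⟩ := Subgroup.mem_zpowers_iff.mp hψ
      have := MulChar.zpow_apply_coe χ m (Units.mk0 u hu)
      have h1 : χ.toUnitHom (Units.mk0 u hu) = 1 :=
        Units.ext (by rw [MulChar.coe_toUnitHom, Units.val_mk0, h, Units.val_one])
      rw [← MulChar.coe_toUnitHom χ, map_zpow, h1, one_zpow, Units.val_one, Units.val_mk0] at this
      exact this
    simp only [this, sum_const, card_univ, nsmul_eq_mul, mul_one]
    rw [← Nat.card_eq_fintype_card, Nat.card_zpowers, he]
  · have h1 : ∑ ψ : Subgroup.zpowers χ, (ψ : MulChar F ℂ) u =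
        χ u * ∑ ψ : Subgroup.zpowers χ, (ψ : MulChar F ℂ) u := by
      rw [mul_sum]
      rw [← Equiv.sum_comp (Equiv.mulLeft (⟨χ, Subgroup.mem_zpowers χ⟩ : Subgroup.zpowers χ))]
      refine sum_congr rfl fun ψ _ => ?_
      simp [MulChar.mul_apply]
    have h2 : (χ u - 1) * ∑ ψ : Subgroup.zpowers χ, (ψ : MulChar F ℂ) u = 0 := by
      rw [sub_mul, one_mul, ← h1, sub_self]
    exact (mul_eq_zero.mp h2).resolve_left (sub_ne_zero.mpr h)

open Classical in
lemma ind_G (χ : MulChar F ℂ) {e : ℕ} (he : orderOf χ = e) (u α : F) (hα : α ≠ 0) :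
    ∑ ψ : Subgroup.zpowers χ, (ψ : MulChar F ℂ) (u * α⁻¹) =
      if χ u = χ α then (e : ℂ) else 0 := by
  have hχα : χ α ≠ 0 := MulChar.apply_ne_zero_iff.mpr hα.isUnit
  by_cases hu : u = 0
  · subst hu
    rw [if_neg (by rw [MulChar.map_zero]; exact hχα.symm)]
    simp [MulChar.map_zero]
  · rw [sum_G χ he _ (mul_ne_zero hu (inv_ne_zero hα))]
    have : χ (u * α⁻¹) = 1 ↔ χ u = χ α := by
      rw [map_mul, ← MulChar.inv_apply', MulChar.inv_apply_eq_inv', ← div_eq_mul_inv, div_eq_one_iff_eq hχα]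
    simp only [this]

open Classical in
lemma count_eq (χ : MulChar F ℂ) {e : ℕ} (he : orderOf χ = e) (α β : F) (hα : α ≠ 0)
    (hβ : β ≠ 0) :
    (e : ℂ) ^ 2 * (#{x : F | χ x = χ α ∧ χ (x + 1) = χ β} : ℂ) =
      ∑ ψ : Subgroup.zpowers χ, ∑ φ : Subgroup.zpowers χ,
        (ψ : MulChar F ℂ) (-α⁻¹) * (φ : MulChar F ℂ) β⁻¹ *
          jacobiSum (ψ : MulChar F ℂ) (φ : MulChar F ℂ) := by
  have h1 : (e : ℂ) ^ 2 * (#{x : F | χ x = χ α ∧ χ (x + 1) = χ β} : ℂ) =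
      ∑ x : F, (∑ ψ : Subgroup.zpowers χ, (ψ : MulChar F ℂ) (x * α⁻¹)) *
        (∑ φ : Subgroup.zpowers χ, (φ : MulChar F ℂ) ((x + 1) * β⁻¹)) := by
    simp_rw [ind_G χ he _ _ hα, ind_G χ he _ _ hβ]
    rw [card_filter, Nat.cast_sum, mul_sum]
    refine sum_congr rfl fun x _ => ?_
    by_cases h1 : χ x = χ α <;> by_cases h2 : χ (x + 1) = χ β <;> simp [h1, h2, sq]
  rw [h1, ← Equiv.sum_comp (Equiv.neg F)]
  simp_rw [sum_mul_sum]
  rw [sum_comm]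
  refine sum_congr rfl fun ψ _ => ?_
  rw [sum_comm]
  refine sum_congr rfl fun φ _ => ?_
  rw [jacobiSum, mul_sum]
  refine sum_congr rfl fun x _ => ?_
  rw [Equiv.neg_apply, show -x * α⁻¹ = (-α⁻¹) * x by ring, map_mul,
    show -x + 1 = 1 - x by ring, map_mul]
  ring

lemma norm_le_one (χ : MulChar F ℂ) (x : F) : ‖χ x‖ ≤ 1 := by
  by_cases hx : x = 0
  · simp [hx, MulChar.map_zero]
  · have := χ.apply_mem_rootsOfUnity_orderOf hx
    obtain ⟨u, hu, h⟩ := this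
    rw [← h]
    have : NeZero (orderOf χ) := ⟨χ.orderOf_pos.ne'⟩
    exact (Complex.norm_eq_one_of_mem_rootsOfUnity hu).le

lemma norm_jacobi {χ φ : MulChar F ℂ} (hχ : χ ≠ 1) (hφ : φ ≠ 1) (h : χ * φ ≠ 1) :
    ‖jacobiSum χ φ‖ = Real.sqrt (Fintype.card F) := by
  have hs : jacobiSum χ⁻¹ φ⁻¹ = star (jacobiSum χ φ) := by
    simp only [jacobiSum, star_sum, star_mul', MulChar.star_apply']
  have hch : ringChar ℂ ≠ ringChar F := by
    rw [ringChar.eq_zero]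
    exact (CharP.ringChar_ne_zero_of_finite F).symm
  have := jacobiSum_mul_jacobiSum_inv hch hχ hφ h
  rw [hs] at this
  have h2 := congrArg norm this
  rw [norm_mul, norm_star, Complex.norm_natCast] at h2
  rw [← h2, Real.sqrt_mul_self (norm_nonneg _)]

open Classical in
lemma main_est (χ : MulChar F ℂ) {e : ℕ} (he : orderOf χ = e) (α β : F) (hα : α ≠ 0)
    (hβ : β ≠ 0) :
    |(e : ℝ) ^ 2 * (#{x : F | χ x = χ α ∧ χ (x + 1) = χ β} : ℝ) -
      ((Fintype.card F : ℝ) + 1 - (if χ (-1) = χ α then (e : ℝ) else 0)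
        - (if χ β = 1 then (e : ℝ) else 0) - (if χ α = χ β then (e : ℝ) else 0))| ≤
      ((e : ℝ) - 1) * ((e : ℝ) - 2) * Real.sqrt (Fintype.card F) := by
  have hcard : Fintype.card (Subgroup.zpowers χ) = e := by
    rw [← Nat.card_eq_fintype_card, Nat.card_zpowers, he]
  set M : Subgroup.zpowers χ → Subgroup.zpowers χ → ℂ := fun ψ φ =>
    (if ψ = 1 then (if φ = 1 then ((Fintype.card F : ℂ) + 1) else 0) else 0)
      - (if φ = 1 then (ψ : MulChar F ℂ) (-1 * α⁻¹) else 0)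
      - (if ψ = 1 then (φ : MulChar F ℂ) (1 * β⁻¹) else 0)
      - (if φ = ψ⁻¹ then (ψ : MulChar F ℂ) (β * α⁻¹) else 0) with hM
  have hMsum : ∑ ψ, ∑ φ, M ψ φ = (Fintype.card F : ℂ) + 1
      - (if χ (-1) = χ α then (e : ℂ) else 0)
      - (if χ β = 1 then (e : ℂ) else 0) - (if χ α = χ β then (e : ℂ) else 0) := by
    have e1 := ind_G χ he (-1) α hα
    have e2 := ind_G χ he 1 β hβ
    have e3 := ind_G χ he β α hα
    rw [MulChar.map_one] at e2
    simp only [eq_comm (a := χ α) (b := χ β), eq_comm (a := χ β) (b := 1)]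
    rw [← e1, ← e2, ← e3]
    simp only [hM, sum_sub_distrib, sum_ite_eq', mem_univ, if_true]
    congr 1
    congr 1
    · congr 1
      rw [sum_comm]; simp
    · rw [sum_comm]; simp
  have hterm : ∀ ψ φ : Subgroup.zpowers χ,
      ‖(ψ : MulChar F ℂ) (-α⁻¹) * (φ : MulChar F ℂ) β⁻¹ *
          jacobiSum (ψ : MulChar F ℂ) (φ : MulChar F ℂ) - M ψ φ‖ ≤
      Real.sqrt (Fintype.card F) * (1 - (if ψ = 1 then 1 else 0) - (if φ = 1 then 1 else 0)
        - (if φ = ψ⁻¹ then 1 else 0) + 2 * (if ψ = 1 then (if φ = 1 then 1 else 0) else 0)) := by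
    intro ψ φ
    have huα : IsUnit (-α⁻¹) := (neg_ne_zero.mpr (inv_ne_zero hα)).isUnit
    have huβ : IsUnit (β⁻¹) := (inv_ne_zero hβ).isUnit
    have huαβ : IsUnit (β * α⁻¹) := (mul_ne_zero hβ (inv_ne_zero hα)).isUnit
    by_cases h1 : ψ = 1 <;> by_cases h2 : φ = 1
    · subst h1 h2
      simp only [hM, Subgroup.coe_one, jacobiSum_one_one, MulChar.one_apply huα,
        MulChar.one_apply huβ, neg_mul, one_mul, inv_one, if_true, MulChar.one_apply huαβ]
      ring_nf
      simp
    · subst h1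
      have h2' : (φ : MulChar F ℂ) ≠ 1 := by simpa using h2
      simp only [hM, Subgroup.coe_one, jacobiSum_one_nontrivial h2', MulChar.one_apply huα,
        neg_mul, one_mul, inv_one, if_true, if_neg h2]
      ring_nf
      simp
    · subst h2
      have h1' : (ψ : MulChar F ℂ) ≠ 1 := by simpa using h1
      have h3 : ¬ (1 = ψ⁻¹) := by
        intro h; exact h1 (by rw [← inv_inv ψ, ← h, inv_one])
      simp only [hM, Subgroup.coe_one, jacobiSum_comm _ 1, jacobiSum_one_nontrivial h1',
        MulChar.one_apply huβ, neg_mul, one_mul, if_true, if_neg h1, if_neg h3]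
      ring_nf
      simp
    · have h1' : (ψ : MulChar F ℂ) ≠ 1 := by simpa using h1
      have h2' : (φ : MulChar F ℂ) ≠ 1 := by simpa using h2
      by_cases h3 : φ = ψ⁻¹
      · have hval : (ψ : MulChar F ℂ) (-α⁻¹) * (φ : MulChar F ℂ) β⁻¹ *
          jacobiSum (ψ : MulChar F ℂ) (φ : MulChar F ℂ) - M ψ φ = 0 := by
          simp only [hM, if_neg h1, if_neg h2, if_pos h3]
          rw [h3, Subgroup.coe_inv, jacobiSum_nontrivial_inv h1', MulChar.inv_apply', inv_inv]
          have : (ψ : MulChar F ℂ) (β * α⁻¹) =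
            (ψ : MulChar F ℂ) (-α⁻¹) * (ψ : MulChar F ℂ) β * (ψ : MulChar F ℂ) (-1) := by
            rw [← map_mul, ← map_mul]; congr 1; ring
          rw [this]; ring
        rw [hval]
        simp [h1, h3]
      · have h4 : (ψ : MulChar F ℂ) * (φ : MulChar F ℂ) ≠ 1 := by
          intro h
          apply h3
          apply Subtype.ext
          rw [Subgroup.coe_inv]
          exact eq_inv_of_mul_eq_one_right h
        simp only [hM, if_neg h1, if_neg h2, if_neg h3, sub_zero, mul_zero, add_zero, mul_one]
        rw [norm_mul, norm_mul, norm_jacobi h1' h2' h4]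
        have k1 := norm_le_one (ψ : MulChar F ℂ) (-α⁻¹)
        have k2 := norm_le_one (φ : MulChar F ℂ) β⁻¹
        have k3 := Real.sqrt_nonneg (Fintype.card F : ℝ)
        have k4 := mul_le_one₀ k1 (norm_nonneg _) k2
        nlinarith
  have hnorm : |(e : ℝ) ^ 2 * (#{x : F | χ x = χ α ∧ χ (x + 1) = χ β} : ℝ) -
      ((Fintype.card F : ℝ) + 1 - (if χ (-1) = χ α then (e : ℝ) else 0)
        - (if χ β = 1 then (e : ℝ) else 0) - (if χ α = χ β then (e : ℝ) else 0))| =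
      ‖∑ ψ : Subgroup.zpowers χ, ∑ φ : Subgroup.zpowers χ,
        ((ψ : MulChar F ℂ) (-α⁻¹) * (φ : MulChar F ℂ) β⁻¹ *
          jacobiSum (ψ : MulChar F ℂ) (φ : MulChar F ℂ) - M ψ φ)‖ := by
    simp only [sum_sub_distrib]
    rw [← count_eq χ he α β hα hβ, hMsum, ← Real.norm_eq_abs, ← Complex.norm_real]
    congr 1
    simp only [Complex.ofReal_sub, Complex.ofReal_mul, Complex.ofReal_pow, Complex.ofReal_add,
      Complex.ofReal_natCast, Complex.ofReal_one, apply_ite Complex.ofReal, Complex.ofReal_zero]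
  rw [hnorm]
  refine (norm_sum_le _ _).trans ?_
  refine (sum_le_sum fun ψ _ => (norm_sum_le _ _).trans (sum_le_sum fun φ _ => hterm ψ φ)).trans ?_
  apply le_of_eq
  simp only [← mul_sum, sum_add_distrib, sum_sub_distrib]
  simp [hcard]
  ring

end CycAux

namespace CycAux
open Finset

variable {F : Type*} [Field F] [Fintype F]

lemma prim_pow_iff {ζ : ℂ} {e : ℕ} (he : e ≠ 0) (hζ : IsPrimitiveRoot ζ e) (i j : ℕ) :
    ζ ^ i = ζ ^ j ↔ i % e = j % e := by
  obtain ⟨u, rfl⟩ := hζ.isUnit he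
  rw [hζ.eq_orderOf, orderOf_units, ← Units.val_pow_eq_pow_val, ← Units.val_pow_eq_pow_val,
    Units.val_inj, pow_inj_mod]

lemma coset_iff {χ : MulChar F ℂ} {ω : Fˣ} (hω : ∀ x : Fˣ, x ∈ Subgroup.zpowers ω) {ζ : ℂ}
    {e : ℕ} (hζ : IsPrimitiveRoot ζ e) (hχ : χ ω = ζ) {a : ℕ} (ha : a < e) (x : Fˣ) :
    InCycCoset ω e a x ↔ χ x = χ ((ω ^ a : Fˣ) : F) := by
  have hpow : ∀ j : ℕ, χ ((ω ^ j : Fˣ) : F) = ζ ^ j := by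
    intro j
    rw [Units.val_pow_eq_pow_val, map_pow, hχ]
  constructor
  · rintro ⟨m, rfl⟩
    rw [← pow_mul, ← pow_add, hpow, hpow, pow_add, pow_mul, hζ.pow_eq_one]
    simp
  · intro h
    obtain ⟨j, hj⟩ := (mem_powers_iff_mem_zpowers (x := ω)).mpr (hω x)
    have hj' : ω ^ j = x := hj
    subst hj'
    rw [hpow, hpow, prim_pow_iff (by omega) hζ, Nat.mod_eq_of_lt ha] at h
    refine ⟨j / e, ?_⟩
    rw [← pow_mul, ← pow_add]
    congr 1
    rw [← h]
    exact (Nat.mod_add_div j e).symm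

open Classical in
lemma cycNum_eq {χ : MulChar F ℂ} {ω : Fˣ} (hω : ∀ x : Fˣ, x ∈ Subgroup.zpowers ω) {ζ : ℂ}
    {e : ℕ} (hζ : IsPrimitiveRoot ζ e) (hχ : χ ω = ζ) {a b : ℕ} (ha : a < e) (hb : b < e) :
    cycNum ω e a b =
      #{x : F | χ x = χ ((ω ^ a : Fˣ) : F) ∧ χ (x + 1) = χ ((ω ^ b : Fˣ) : F)} := by
  unfold cycNum
  rw [Nat.card_coe_set_eq, ← Set.ncard_image_of_injective _ (Units.val_injective (α := F)),
    ← Set.ncard_coe_finset]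
  congr 1
  ext x
  simp only [Set.mem_image, Set.mem_ofPred_eq, coe_filter, mem_univ, true_and]
  constructor
  · rintro ⟨x, ⟨h1, y, h2, h3⟩, rfl⟩
    rw [coset_iff hω hζ hχ ha] at h1
    rw [coset_iff hω hζ hχ hb, h3] at h2
    exact ⟨h1, h2⟩
  · rintro ⟨h1, h2⟩
    have hx : IsUnit x := by
      rw [← MulChar.apply_ne_zero_iff (χ := χ), h1, MulChar.apply_ne_zero_iff]
      exact Units.isUnit _
    have hy : IsUnit (x + 1) := by
      rw [← MulChar.apply_ne_zero_iff (χ := χ), h2, MulChar.apply_ne_zero_iff]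
      exact Units.isUnit _
    obtain ⟨u, rfl⟩ := hx
    obtain ⟨v, hv⟩ := hy
    refine ⟨u, ⟨(coset_iff hω hζ hχ ha _).mpr h1, v, (coset_iff hω hζ hχ hb _).mpr ?_, hv⟩, rfl⟩
    rw [hv, h2]

lemma chi_neg_one {χ : MulChar F ℂ} {ω : Fˣ} (hω : ∀ x : Fˣ, x ∈ Subgroup.zpowers ω) {ζ : ℂ}
    {q r : ℕ} (hq : 2 ≤ q) (hr : r ≠ 0) (hF : Fintype.card F = q ^ r)
    (hζ : IsPrimitiveRoot ζ (q - 1)) (hχ : χ ω = ζ) {a : ℕ} (ha : a < q - 1) :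
    χ (-1) = ζ ^ a ↔ ((Even r ∧ a = 0) ∨ (Odd r ∧ Even q ∧ a = 0) ∨
              (Odd r ∧ Odd q ∧ a = (q - 1) / 2)) := by
  rcases Nat.even_or_odd q with he | ho
  · have hch : (2 : F) = 0 := by
      have h1 : ((q ^ r : ℕ) : F) = 0 := by rw [← hF]; exact Nat.cast_card_eq_zero F
      have h2 : Even (Fintype.card F) := by rw [hF]; exact Even.pow_of_ne_zero he hr
      have := FiniteField.even_card_iff_char_two.mpr (Nat.even_iff.mp h2)
      have h3 := ringChar.Nat.cast_ringChar (R := F)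
      rw [this] at h3
      exact_mod_cast h3
    have hneg : (-1 : F) = 1 := by linear_combination (-1 : F) * hch
    rw [hneg, MulChar.map_one, ← pow_zero ζ, prim_pow_iff (by omega) hζ, Nat.zero_mod, Nat.mod_eq_of_lt ha]
    have : ¬ Odd q := Nat.not_odd_iff_even.mpr he
    rcases Nat.even_or_odd r with h | h
    · have : ¬ Odd r := Nat.not_odd_iff_even.mpr h
      simp [*, eq_comm]
    · have : ¬ Even r := Nat.not_even_iff_odd.mpr h
      simp [*, eq_comm]
  · obtain ⟨h, hh⟩ := ho
    have hqh : q - 1 = 2 * h := by omega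
    have hhpos : 0 < h := by omega
    -- the quotient
    set k := ∑ i ∈ range r, q ^ i with hkdef
    have hgeom : k * (q - 1) + 1 = q ^ r := by
      have := Nat.geomSum_eq hq r
      have hd : (q - 1) ∣ q ^ r - 1 := by simpa using Nat.sub_dvd_pow_sub_pow q 1 r
      rw [hkdef, this, Nat.div_mul_cancel hd]
      have : 0 < q ^ r := by positivity
      omega
    have hkpar : k % 2 = r % 2 := by
      rw [hkdef, Finset.sum_nat_mod]
      have : ∀ i, q ^ i % 2 = 1 := fun i => Nat.odd_iff.mp (Odd.pow (⟨h, hh⟩ : Odd q))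
      simp [this]
    classical
    have hordω : orderOf ω = k * (q - 1) := by
      rw [orderOf_eq_card_of_forall_mem_zpowers hω, Nat.card_eq_fintype_card, Fintype.card_units, hF]
      omega
    have hkpos : 0 < k := by
      rcases Nat.eq_zero_or_pos k with h0 | h0
      · rw [h0, zero_mul, zero_add] at hgeom
        have := Nat.one_lt_pow hr (show 1 < q by omega)
        omega
      · exact h0
    have hneg : ((ω ^ (k * h) : Fˣ) : F) = -1 := by
      have h2 : (ω ^ (k * h)) ^ 2 = 1 := by
        rw [← pow_mul, mul_assoc, mul_comm h 2, ← hqh, ← hordω, pow_orderOf_eq_one]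
      have h3 : ((ω ^ (k * h) : Fˣ) : F) ^ 2 = 1 := by
        rw [← Units.val_pow_eq_pow_val, h2, Units.val_one]
      rcases sq_eq_one_iff.mp h3 with h4 | h4
      · exfalso
        have h5 : ω ^ (k * h) = 1 := Units.ext (by simpa using h4)
        have h6 := orderOf_dvd_of_pow_eq_one h5
        have h7 := Nat.le_of_dvd (by positivity) h6
        rw [hordω, hqh] at h7
        nlinarith [Nat.mul_pos hkpos hhpos]
      · exact h4
    rw [← hneg, Units.val_pow_eq_pow_val, map_pow, hχ, prim_pow_iff (by omega) hζ, Nat.mod_eq_of_lt ha]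
    have hnq : ¬ Even q := Nat.not_even_iff_odd.mpr ⟨h, hh⟩
    have hoq : Odd q := ⟨h, hh⟩
    rcases Nat.even_or_odd r with hr' | hr'
    · have hkm : k % 2 = 0 := by rw [hkpar]; exact Nat.even_iff.mp hr'
      obtain ⟨m, hm⟩ : ∃ m, k = 2 * m := ⟨k / 2, by omega⟩
      have h1 : k * h % (q - 1) = 0 := by
        rw [hm, hqh, show 2 * m * h = 2 * h * m by ring, Nat.mul_mod_right]
      have h2 : ¬ Odd r := Nat.not_odd_iff_even.mpr hr'
      rw [h1]
      simp only [h2, hr', false_and, true_and, or_false, eq_comm]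
    · have hkm : k % 2 = 1 := by rw [hkpar]; exact Nat.odd_iff.mp hr'
      obtain ⟨m, hm⟩ : ∃ m, k = 2 * m + 1 := ⟨k / 2, by omega⟩
      have h1 : k * h % (q - 1) = (q - 1) / 2 := by
        rw [hm, hqh, show (2 * m + 1) * h = h + 2 * h * m by ring, Nat.add_mul_mod_self_left,
          Nat.mod_eq_of_lt (by omega)]
        omega
      have h2 : ¬ Even r := Nat.not_even_iff_odd.mpr hr'
      rw [h1]
      simp only [h2, hr', hnq, hoq, false_and, true_and, false_or, eq_comm]

end CycAux

open Classical in
/-- The cyclotomic number `(a,b)_{q-1}` equals the main term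
`M_{a,b} = (q^r - 2 + A_r(a) + B(b) + C(a,b))/(q-1)^2` up to an error of absolute value at
most `((q-2)(q-3)/(q-1)^2) q^{r/2}`. -/
theorem cycNum_main_term_estimate {p n q r k : ℕ} (hp : p.Prime) (hn : 1 ≤ n) (hq : q = p ^ n)
    (hr : 2 ≤ r) (hk : k = (q ^ r - 1) / (q - 1))
    {F : Type*} [Field F] [Fintype F] (hF : Fintype.card F = q ^ r)
    (ω : Fˣ) (hω : ∀ x : Fˣ, x ∈ Subgroup.zpowers ω)
    (a b : ℕ) (ha : a ≤ q - 2) (hb : b ≤ q - 2) :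
    |(cycNum ω (q - 1) a b : ℝ) -
        ((q : ℝ) ^ r - 2 +
          (if (Even r ∧ a = 0) ∨ (Odd r ∧ Even q ∧ a = 0) ∨
              (Odd r ∧ Odd q ∧ a = (q - 1) / 2) then -((q : ℝ) - 2) else 1) +
          (if b = 0 then -((q : ℝ) - 2) else 1) +
          (if a = b then -((q : ℝ) - 2) else 1)) / ((q : ℝ) - 1) ^ 2| ≤
      ((q : ℝ) - 2) * ((q : ℝ) - 3) / ((q : ℝ) - 1) ^ 2 * (q : ℝ) ^ ((r : ℝ) / 2) := by
  have hq2 : 2 ≤ q := by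
    rw [hq]
    exact hp.two_le.trans (Nat.le_self_pow (by omega) p)
  have he0 : q - 1 ≠ 0 := by omega
  have hdvd : (q - 1) ∣ Fintype.card Fˣ := by
    rw [Fintype.card_units, hF]
    simpa using Nat.sub_dvd_pow_sub_pow q 1 r
  have hζ := Complex.isPrimitiveRoot_exp (q - 1) he0
  set ζ := Complex.exp (2 * Real.pi * Complex.I / ((q - 1 : ℕ) : ℂ)) with hζdef
  obtain ⟨u, hu⟩ := hζ.isUnit he0
  have hmem : u ∈ rootsOfUnity (Fintype.card Fˣ) ℂ := by
    rw [mem_rootsOfUnity]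
    apply Units.ext
    rw [Units.val_pow_eq_pow_val, hu, Units.val_one]
    exact (hζ.pow_eq_one_iff_dvd _).mpr hdvd
  obtain ⟨χ, hχ⟩ : ∃ χ : MulChar F ℂ, χ ω = ζ :=
    ⟨MulChar.ofRootOfUnity hmem hω, by rw [MulChar.ofRootOfUnity_spec, hu]⟩
  have hord : orderOf χ = q - 1 := by
    rw [hζ.eq_orderOf]
    apply orderOf_eq_orderOf_iff.mpr
    intro n
    rw [MulChar.eq_iff hω, MulChar.pow_apply_coe, hχ, MulChar.one_apply_coe]
  have hpow : ∀ j : ℕ, χ ((ω ^ j : Fˣ) : F) = ζ ^ j := by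
    intro j
    rw [Units.val_pow_eq_pow_val, map_pow, hχ]
  have ha' : a < q - 1 := by omega
  have hb' : b < q - 1 := by omega
  have key := CycAux.main_est χ hord ((ω ^ a : Fˣ) : F) ((ω ^ b : Fˣ) : F)
    (Units.ne_zero _) (Units.ne_zero _)
  rw [← CycAux.cycNum_eq hω hζ hχ ha' hb', hpow, hpow] at key
  have c2 : ζ ^ b = 1 ↔ b = 0 := by
    rw [← pow_zero ζ, CycAux.prim_pow_iff he0 hζ, Nat.zero_mod, Nat.mod_eq_of_lt hb']
  have c3 : ζ ^ a = ζ ^ b ↔ a = b := by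
    rw [CycAux.prim_pow_iff he0 hζ, Nat.mod_eq_of_lt ha', Nat.mod_eq_of_lt hb']
  have c1 := CycAux.chi_neg_one hω hq2 (by omega : r ≠ 0) hF hζ hχ ha'
  simp only [c1, c2, c3] at key
  have hcast : ((q - 1 : ℕ) : ℝ) = (q : ℝ) - 1 := by
    rw [Nat.cast_sub (by omega), Nat.cast_one]
  have hsqrt : Real.sqrt (Fintype.card F) = (q : ℝ) ^ ((r : ℝ) / 2) := by
    rw [hF, Real.sqrt_eq_rpow, Nat.cast_pow, ← Real.rpow_natCast, ← Real.rpow_mul (by positivity)]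
    congr 1
    ring
  rw [hsqrt, hF, hcast] at key
  have hqR : (2 : ℝ) ≤ q := by exact_mod_cast hq2
  have hpos : 0 < ((q : ℝ) - 1) ^ 2 := by
    have : (0 : ℝ) < q - 1 := by linarith
    positivity
  have hne := hpos.ne'
  rw [div_mul_eq_mul_div, le_div_iff₀ hpos]
  nth_rewrite 2 [← abs_of_pos hpos]
  rw [← abs_mul, sub_mul, div_mul_cancel₀ _ hne]
  have hite : ∀ (P : Prop) [Decidable P], (if P then -((q : ℝ) - 2) else 1) =
      1 - (if P then ((q : ℝ) - 1) else 0) := by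
    intro P _
    split_ifs <;> ring
  simp only [hite]
  have e2 : ((q : ℝ) - 2) * ((q : ℝ) - 3) * (q : ℝ) ^ ((r : ℝ) / 2) =
      ((q : ℝ) - 1 - 1) * ((q : ℝ) - 1 - 2) * (q : ℝ) ^ ((r : ℝ) / 2) := by ring
  rw [e2]
  refine le_of_eq_of_le (congrArg abs ?_) key
  rw [Nat.cast_pow]
  ring
end

section
/- Let q = p^n be a prime power with q ≥ 4, let r ≥ 3 be an integer, and let k = (q^r − 1)/(q − 1). Then for every 0 ≤ a,b ≤ q−2, the cyclotomic number satisfies the strict inequality (a,b)_{q−1} < ⌈k/2⌉. -/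
/-- If `q = p^n ≥ 4` is a prime power, `r ≥ 3`, and `k = (q^r - 1)/(q - 1)`, then every
cyclotomic number `(a,b)_{q-1}` over `𝔽_{q^r}` is strictly less than `⌈k/2⌉`. -/
theorem cycNum_lt_ceil_half_k {p n q r k : ℕ} (hp : p.Prime) (hn : 1 ≤ n) (hq : q = p ^ n)
    (hq4 : 4 ≤ q) (hr : 3 ≤ r) (hk : k = (q ^ r - 1) / (q - 1))
    {F : Type*} [Field F] [Fintype F] (hF : Fintype.card F = q ^ r)
    (ω : Fˣ) (hω : ∀ x : Fˣ, x ∈ Subgroup.zpowers ω)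
    (a b : ℕ) (ha : a ≤ q - 2) (hb : b ≤ q - 2) :
    cycNum ω (q - 1) a b < (k + 1) / 2 := by
  classical
  have : Fact p.Prime := ⟨hp⟩
  have : CharP F p := by
    apply charP_of_card_eq_prime_pow (f := n * r)
    rw [hF, hq, pow_mul]
  obtain ⟨s, rfl⟩ : ∃ s, r = s + 1 := ⟨r - 1, by omega⟩
  obtain ⟨m, hm⟩ : ∃ m, m = ∑ i ∈ Finset.range s, q ^ i := ⟨_, rfl⟩
  have hk1 : k = ∑ i ∈ Finset.range (s + 1), q ^ i := by
    rw [hk, Nat.geomSum_eq (by omega)]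
  have hkm : k = m + q ^ s := by rw [hk1, Finset.sum_range_succ, hm]
  have hkq : k = q * m + 1 := by
    rw [hk1, Finset.sum_range_succ', hm, Finset.mul_sum]
    simp [pow_succ']
  have hm1 : 1 ≤ m := by
    rw [hm]
    have := Finset.single_le_sum (f := fun i => q ^ i) (s := Finset.range s)
      (fun i _ => Nat.zero_le _) (Finset.mem_range.2 (show 0 < s by omega))
    simpa using this
  have hcard : (q - 1) * k = Fintype.card Fˣ := by
    rw [Fintype.card_units, hF, hk1]
    have := Nat.geomSum_eq (m := q) (by omega) (s + 1)
    rw [this]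
    exact Nat.mul_div_cancel' (by simpa using Nat.sub_dvd_pow_sub_pow q 1 (s + 1))
  have hcos : ∀ (c : ℕ) (x : Fˣ), InCycCoset ω (q - 1) c x → x ^ k = ω ^ (c * k) := by
    rintro c x ⟨j, rfl⟩
    have h1 : (ω ^ (q - 1)) ^ k = 1 := by rw [← pow_mul, hcard, pow_card_eq_one]
    rw [mul_pow, ← pow_mul, ← pow_mul _ j k, mul_comm j k, pow_mul _ k j, h1, one_pow, mul_one]
  set A : F := ((ω ^ (a * k) : Fˣ) : F) with hA
  set B : F := ((ω ^ (b * k) : Fˣ) : F) with hB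
  let P : Polynomial F := (Polynomial.X + Polynomial.C 1) ^ m * (Polynomial.X ^ m + Polynomial.C A)
  let Q : Polynomial F := Polynomial.C B * Polynomial.X ^ m
  have hPm : P.Monic := ((Polynomial.monic_X_add_C 1).pow m).mul
    (Polynomial.monic_X_pow_add_C A (by omega))
  have hPd : P.natDegree = 2 * m := by
    rw [Polynomial.Monic.natDegree_mul ((Polynomial.monic_X_add_C 1).pow m)
      (Polynomial.monic_X_pow_add_C A (by omega)), Polynomial.natDegree_pow,
      Polynomial.natDegree_X_add_C, Polynomial.natDegree_X_pow_add_C]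
    ring
  have hQd : Q.natDegree ≤ m := Polynomial.natDegree_C_mul_X_pow_le _ _
  have hR0 : P - Q ≠ 0 := by
    intro h
    rw [sub_eq_zero] at h
    rw [← h] at hQd
    omega
  have hRd : (P - Q).natDegree ≤ 2 * m :=
    (Polynomial.natDegree_sub_le _ _).trans (max_le hPd.le (by omega))
  have hle : cycNum ω (q - 1) a b ≤ 2 * m := by
    unfold cycNum
    rw [Nat.card_coe_set_eq]
    refine le_trans ?_ ((Multiset.toFinset_card_le _).trans ((Polynomial.card_roots' (P - Q)).trans hRd))
    rw [← Set.ncard_coe_finset]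
    refine Set.ncard_le_ncard_of_injOn (fun x : Fˣ => (x : F)) ?_
      (fun x _ y _ h => Units.ext h) (Set.toFinite _)
    rintro x ⟨hx, y, hy, hyx⟩
    have h1 : (x : F) ^ k = A := by rw [hA, ← hcos a x hx]; simp
    have h2 : ((x : F) + 1) ^ k = B := by rw [hB, ← hcos b y hy, ← hyx]; simp
    have h3 : ((x : F) + 1) ^ (q ^ s) = (x : F) ^ (q ^ s) + 1 := by
      rw [hq, ← pow_mul, add_pow_char_pow, one_pow]
    rw [hkm, pow_add] at h1 h2
    rw [h3] at h2
    simp only [Finset.mem_coe, Multiset.mem_toFinset]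
    rw [Polynomial.mem_roots hR0, Polynomial.IsRoot.def]
    simp only [P, Q, Polynomial.eval_sub, Polynomial.eval_mul, Polynomial.eval_pow,
      Polynomial.eval_add, Polynomial.eval_X, Polynomial.eval_C]
    rw [← h1, ← h2]
    ring
  have : 4 * m ≤ q * m := Nat.mul_le_mul_right _ hq4
  omega
end

section
/- Let q = p^n be a power of an odd prime p, take r = 2, k = q + 1, and 0 ≤ a,b ≤ q−2. Put Δ(a,b) = (1 + ω^{ak} − ω^{bk})^2 − 4ω^{ak} ∈ 𝔽_q. Then (a,b)_{q−1} = 1 if Δ(a,b) = 0; (a,b)_{q−1} = 0 if Δ(a,b) ≠ 0 and Δ(a,b) is a square in 𝔽_q; and (a,b)_{q−1} = 2 if Δ(a,b) is a nonsquare in 𝔽_q. -/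
lemma inCyc_iff {F : Type*} [Field F] [Fintype F] {q : ℕ} (hq3 : 2 ≤ q)
    (hF : Fintype.card F = q ^ 2) (ω : Fˣ) (hω : ∀ x : Fˣ, x ∈ Subgroup.zpowers ω)
    (a : ℕ) (x : Fˣ) :
    InCycCoset ω (q - 1) a x ↔ (x : F) ^ (q + 1) = ((ω : F) ^ (q + 1)) ^ a := by
  classical
  have hqq : (q - 1) * (q + 1) = q ^ 2 - 1 := by
    obtain ⟨t, rfl⟩ := Nat.exists_eq_add_of_le hq3
    have h1 : 2 + t - 1 = t + 1 := by omega
    rw [h1]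
    symm
    apply Nat.sub_eq_of_eq_add
    ring
  have hord : orderOf ω = (q - 1) * (q + 1) := by
    rw [orderOf_eq_card_of_forall_mem_zpowers hω, Nat.card_eq_fintype_card, Fintype.card_units,
      hF, hqq]
  have h1 : ((ω ^ (q - 1)) ^ (q + 1) : Fˣ) = 1 := by
    rw [← pow_mul, ← hord, pow_orderOf_eq_one]
  have key : (x : F) ^ (q + 1) = ((ω : F) ^ (q + 1)) ^ a ↔ x ^ (q + 1) = (ω ^ (q + 1)) ^ a := by
    rw [← Units.val_inj]; push_cast; rfl
  rw [key]
  constructor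
  · rintro ⟨m, rfl⟩
    rw [mul_pow, pow_right_comm (ω ^ (q - 1)), h1, one_pow, mul_one, pow_right_comm]
  · intro h
    have hy := hω (x * (ω ^ a)⁻¹)
    rw [← mem_powers_iff_mem_zpowers] at hy
    obtain ⟨j, hj⟩ := hy
    have hj : ω ^ j = x * (ω ^ a)⁻¹ := hj
    have h2 : ω ^ (j * (q + 1)) = 1 := by
      rw [pow_mul, hj, mul_pow, h, inv_pow, pow_right_comm, mul_inv_cancel]
    have h3 := orderOf_dvd_of_pow_eq_one h2
    rw [hord] at h3
    obtain ⟨m, hm⟩ := Nat.dvd_of_mul_dvd_mul_right (Nat.succ_pos q) h3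
    refine ⟨m, ?_⟩
    rw [← pow_mul, ← hm, hj, mul_comm, inv_mul_cancel_right]

/-- For `q` a power of an odd prime, `r = 2`, `k = q + 1`, and
`Δ(a,b) = (1 + ω^{ak} - ω^{bk})^2 - 4 ω^{ak} ∈ 𝔽_q`, the cyclotomic number `(a,b)_{q-1}`
over `𝔽_{q^2}` is `1`, `0`, or `2` according as `Δ(a,b)` is zero, a nonzero square,
or a nonsquare. -/
theorem cycNum_r_two_odd_char {p n q : ℕ} (hp : p.Prime) (hodd : Odd p) (hn : 1 ≤ n)
    (hq : q = p ^ n)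
    {K F : Type*} [Field K] [Field F] [Fintype K] [Fintype F] [Algebra K F]
    (hK : Fintype.card K = q) (hF : Fintype.card F = q ^ 2)
    (ω : Fˣ) (hω : ∀ x : Fˣ, x ∈ Subgroup.zpowers ω)
    (ζ : K) (hζ : algebraMap K F ζ = (ω : F) ^ (q + 1))
    (a b : ℕ) (ha : a ≤ q - 2) (hb : b ≤ q - 2) :
    ((1 + ζ ^ a - ζ ^ b) ^ 2 - 4 * ζ ^ a = 0 → cycNum ω (q - 1) a b = 1) ∧
    ((1 + ζ ^ a - ζ ^ b) ^ 2 - 4 * ζ ^ a ≠ 0 →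
      IsSquare ((1 + ζ ^ a - ζ ^ b) ^ 2 - 4 * ζ ^ a) → cycNum ω (q - 1) a b = 0) ∧
    (¬ IsSquare ((1 + ζ ^ a - ζ ^ b) ^ 2 - 4 * ζ ^ a) → cycNum ω (q - 1) a b = 2) := by
  classical
  haveI : Fact p.Prime := ⟨hp⟩
  have hqodd : Odd q := hq ▸ hodd.pow
  have hp3 : 3 ≤ p := by
    have := hp.two_le
    obtain ⟨t, ht⟩ := hodd
    omega
  have hq3 : 3 ≤ q := hq ▸ hp3.trans (Nat.le_self_pow (by omega) p)
  have hcK : CharP K p := by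
    obtain ⟨p', h'⟩ := CharP.exists K
    haveI := h'
    obtain ⟨m, hp', hc⟩ := FiniteField.card K p'
    rw [hK, hq] at hc
    have : p = p' := by
      have h1 : p ∣ p' ^ (m : ℕ) := hc ▸ dvd_pow_self p (by omega)
      exact (Nat.prime_dvd_prime_iff_eq hp hp').1 (hp.dvd_of_dvd_pow h1)
    rw [this]; exact h'
  haveI hcF : CharP F p := charP_of_injective_algebraMap (algebraMap K F).injective p
  have h2p : p ≠ 2 := by omega
  have hrK : ringChar K ≠ 2 := by rw [ringChar.eq K p]; exact h2p
  have hrF : ringChar F ≠ 2 := by rw [ringChar.eq F p]; exact h2p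
  have h2F : (2 : F) ≠ 0 := Ring.two_ne_zero hrF
  have hadd : ∀ x y : F, (x + y) ^ q = x ^ q + y ^ q := by
    intro x y; rw [hq]; exact add_pow_char_pow x y p n
  have hsub : ∀ x y : F, (x - y) ^ q = x ^ q - y ^ q := by
    intro x y; rw [hq]; exact sub_pow_char_pow x y n
  have hfix : ∀ c : K, (algebraMap K F c) ^ q = algebraMap K F c := by
    intro c; rw [← map_pow, ← hK, FiniteField.pow_card]
  have h2q : (2 : F) ^ q = 2 := by
    have := hfix 2
    rwa [map_ofNat] at this
  set A : K := ζ ^ a with hA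
  set B : K := ζ ^ b with hB
  set D : K := (1 + A - B) ^ 2 - 4 * A with hD
  set T : F := algebraMap K F (B - A - 1) with hT
  have hTq : T ^ q = T := hfix _
  have hζ0 : ζ ≠ 0 := by
    rintro rfl
    rw [map_zero] at hζ
    exact pow_ne_zero _ ω.ne_zero hζ.symm
  have hA0 : algebraMap K F A ≠ 0 := by
    rw [Ne, map_eq_zero]; exact pow_ne_zero _ hζ0
  have hB0 : algebraMap K F B ≠ 0 := by
    rw [Ne, map_eq_zero]; exact pow_ne_zero _ hζ0
  have hDF : algebraMap K F D = T ^ 2 - 4 * algebraMap K F A := by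
    simp only [hD, hT, map_sub, map_add, map_pow, map_mul, map_one, map_ofNat]
    ring
  have hTF : T = algebraMap K F B - algebraMap K F A - 1 := by
    simp only [hT, map_sub, map_one]
  have hcoA : ∀ x : Fˣ, InCycCoset ω (q - 1) a x ↔ (x : F) ^ (q + 1) = algebraMap K F A := by
    intro x; rw [inCyc_iff (by omega) hF ω hω, ← hζ, ← map_pow]
  have hcoB : ∀ x : Fˣ, InCycCoset ω (q - 1) b x ↔ (x : F) ^ (q + 1) = algebraMap K F B := by
    intro x; rw [inCyc_iff (by omega) hF ω hω, ← hζ, ← map_pow]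
  have hnorm : ∀ z : F, z ^ (q + 1) = algebraMap K F A →
      (z + 1) ^ (q + 1) = algebraMap K F A + (z ^ q + z) + 1 := by
    intro z hz
    rw [← hz, pow_succ, hadd, one_pow]; ring
  have hcard : cycNum ω (q - 1) a b =
      Set.ncard {z : F | (2 * z - T) ^ 2 = algebraMap K F D ∧ (2 * z - T) ^ q = -(2 * z - T)} := by
    unfold cycNum
    rw [Nat.card_coe_set_eq, ← Set.ncard_image_of_injective _ (Units.val_injective (α := F))]
    congr 1
    ext z
    simp only [Set.mem_image, Set.mem_setOf_eq, hcoA, hcoB]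
    constructor
    · rintro ⟨x, ⟨hx, y, hy, hyx⟩, rfl⟩
      rw [hyx, hnorm _ hx] at hy
      have h1 : (x : F) ^ q = T - x := by rw [hTF]; linear_combination hy
      have h2 : (T - x) * (x : F) = algebraMap K F A := by rw [← h1, ← pow_succ, hx]
      refine ⟨?_, ?_⟩
      · rw [hDF]; linear_combination -4 * h2
      · rw [hsub, mul_pow, h2q, h1, hTq]; ring
    · rintro ⟨h1, h2⟩
      rw [hsub, mul_pow, h2q, hTq] at h2
      have h3 : z ^ q = T - z := by
        apply mul_left_cancel₀ h2F
        linear_combination h2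
      rw [hDF] at h1
      have h4F : (4 : F) ≠ 0 := by
        have : (4 : F) = 2 * 2 := by norm_num
        rw [this]; exact mul_ne_zero h2F h2F
      have hz : z ^ (q + 1) = algebraMap K F A := by
        rw [pow_succ, h3]
        apply mul_left_cancel₀ h4F
        linear_combination -h1
      have hz1 : (z + 1) ^ (q + 1) = algebraMap K F B := by
        rw [hnorm z hz, h3, hTF]; ring
      have z0 : z ≠ 0 := by
        rintro rfl; rw [zero_pow (by omega)] at hz; exact hA0 hz.symm
      have z1 : z + 1 ≠ 0 := by
        intro h; rw [h, zero_pow (by omega)] at hz1; exact hB0 hz1.symm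
      exact ⟨Units.mk0 z z0, ⟨hz, Units.mk0 (z + 1) z1, hz1, rfl⟩, rfl⟩
  rw [hcard]
  obtain ⟨m, hm⟩ := hqodd
  refine ⟨?_, ?_, ?_⟩
  · intro h0
    rw [Set.ncard_eq_one]
    refine ⟨T / 2, ?_⟩
    ext z
    simp only [Set.mem_setOf_eq, Set.mem_singleton_iff, h0, map_zero]
    constructor
    · rintro ⟨h1, -⟩
      have := pow_eq_zero_iff (two_ne_zero) |>.1 h1
      field_simp
      linear_combination this
    · rintro rfl
      have : 2 * (T / 2) - T = 0 := by field_simp; ring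
      rw [this]
      exact ⟨by simp, by rw [zero_pow (by omega), neg_zero]⟩
  · rintro h0 ⟨s, hs⟩
    rw [Set.ncard_eq_zero, Set.eq_empty_iff_forall_notMem]
    rintro z ⟨h1, h2⟩
    set d := 2 * z - T with hd
    have h3 : d ^ q = d := by
      rw [hs, map_mul, ← sq] at h1
      rcases sq_eq_sq_iff_eq_or_eq_neg.1 h1 with h | h
      · rw [h, hfix]
      · rw [h, ← map_neg, hfix]
    have h4 : d = 0 := by
      apply mul_left_cancel₀ h2F
      linear_combination h2 - h3
    rw [h4] at h1
    apply h0
    apply (algebraMap K F).injective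
    rw [← h1, map_zero]; ring
  · intro hns
    have hD0 : D ≠ 0 := by
      intro h; exact hns (h ▸ IsSquare.zero)
    have hDF0 : algebraMap K F D ≠ 0 := by rwa [Ne, map_eq_zero]
    have hDm : D ^ m = -1 := by
      have hm2 : Fintype.card K / 2 = m := by rw [hK]; omega
      rcases FiniteField.pow_dichotomy hrK hD0 with h | h
      · exact absurd ((FiniteField.isSquare_iff hrK hD0).2 h) hns
      · rwa [hm2] at h
    have hsq : IsSquare (algebraMap K F D) := by
      rw [FiniteField.isSquare_iff hrF hDF0]
      have : Fintype.card F / 2 = m * 2 * (m + 1) := by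
        rw [hF, hm]
        have : (2 * m + 1) ^ 2 = 2 * (m * 2 * (m + 1)) + 1 := by ring
        omega
      rw [this, pow_mul, pow_mul, ← map_pow, hDm]
      simp
    obtain ⟨d, hd⟩ := hsq
    have hd0 : d ≠ 0 := by rintro rfl; exact hDF0 (by rw [hd, mul_zero])
    have hdq : d ^ q = -d := by
      rw [hm, pow_succ, pow_mul, sq, ← hd, ← map_pow, hDm]; simp
    rw [Set.ncard_eq_two]
    refine ⟨(T + d) / 2, (T - d) / 2, ?_, ?_⟩
    · intro h
      field_simp at h
      apply hd0
      apply mul_left_cancel₀ h2F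
      linear_combination h
    · ext z
      simp only [Set.mem_setOf_eq, Set.mem_insert_iff, Set.mem_singleton_iff, hd, ← sq d]
      constructor
      · rintro ⟨h1, -⟩
        rcases sq_eq_sq_iff_eq_or_eq_neg.1 h1 with h | h
        · left; field_simp; linear_combination h
        · right; field_simp; linear_combination h
      · rintro (rfl | rfl)
        · have : 2 * ((T + d) / 2) - T = d := by field_simp; ring
          rw [this]; exact ⟨rfl, hdq⟩
        · have : 2 * ((T - d) / 2) - T = -d := by field_simp; ring
          rw [this]
          refine ⟨neg_sq d, ?_⟩
          rw [Odd.neg_pow ⟨m, hm⟩, hdq]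
end

section
/- Let q = 2^n with n ≥ 1, take r = 2, k = q + 1, and 0 ≤ a,b ≤ q−2. Put c = 1 + ω^{ak} + ω^{bk} ∈ 𝔽_q. Then (a,b)_{q−1} = 1 if c = 0; (a,b)_{q−1} = 0 if c ≠ 0 and Tr_{𝔽_q/𝔽_2}(ω^{ak}/c^2) = 0; and (a,b)_{q−1} = 2 if c ≠ 0 and Tr_{𝔽_q/𝔽_2}(ω^{ak}/c^2) = 1. -/
/-- artin-schreier iterate -/
lemma as_iter {L : Type*} [Field L] [CharP L 2] (y d : L) (h : y ^ 2 = y + d) (m : ℕ) :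
    y ^ 2 ^ m = y + ∑ i ∈ Finset.range m, d ^ 2 ^ i := by
  induction m with
  | zero => simp
  | succ m ih =>
    rw [Finset.sum_range_succ, ← add_assoc, ← ih, pow_succ', pow_mul, h, add_pow_char_pow]

lemma inCos_iff {F : Type*} [Field F] [Fintype F] {q : ℕ} (hq : 2 ≤ q) (hF : Fintype.card F = q ^ 2)
    (ω : Fˣ) (hω : ∀ x : Fˣ, x ∈ Subgroup.zpowers ω) (a : ℕ) (x : Fˣ) :
    InCycCoset ω (q - 1) a x ↔ (x : F) ^ (q + 1) = ((ω : F) ^ (q + 1)) ^ a := by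
  classical
  have hord : orderOf ω = (q - 1) * (q + 1) := by
    rw [orderOf_eq_card_of_forall_mem_zpowers hω, Nat.card_eq_fintype_card, Fintype.card_units, hF]
    obtain ⟨r, rfl⟩ : ∃ r, q = r + 1 := ⟨q - 1, by omega⟩
    simp only [Nat.add_sub_cancel]
    have : (r + 1) ^ 2 = r * (r + 1 + 1) + 1 := by ring
    omega
  have e : (x : F) ^ (q + 1) = ((ω : F) ^ (q + 1)) ^ a ↔ x ^ (q + 1) = (ω ^ (q + 1)) ^ a := by
    rw [Units.ext_iff]; push_cast; rfl
  rw [e]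
  constructor
  · rintro ⟨m, rfl⟩
    have : ((ω ^ (q - 1)) ^ m) ^ (q + 1) = 1 := by
      rw [← pow_mul, mul_comm m, pow_mul, ← pow_mul ω, ← hord, pow_orderOf_eq_one, one_pow]
    rw [mul_pow, this, mul_one, ← pow_mul, ← pow_mul, mul_comm]
  · intro h
    obtain ⟨j, hj⟩ := (mem_powers_iff_mem_zpowers).2 (hω ((ω ^ a)⁻¹ * x))
    simp only at hj
    have h1 : ω ^ (j * (q + 1)) = 1 := by
      rw [pow_mul, hj, mul_pow, h, inv_pow, ← pow_mul, ← pow_mul, mul_comm a, inv_mul_cancel]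
    have h2 := orderOf_dvd_of_pow_eq_one h1
    rw [hord] at h2
    obtain ⟨m, hm⟩ := Nat.dvd_of_mul_dvd_mul_right (by omega) h2
    refine ⟨m, ?_⟩
    rw [← pow_mul, ← hm, hj, mul_inv_cancel_left]

lemma mem_range_of_pow {F L : Type*} [Field F] [Fintype F] [Field L] [Algebra F L] (y : L)
    (h : y ^ Fintype.card F = y) : ∃ x : F, algebraMap F L x = y := by
  classical
  let p : Polynomial F := Polynomial.X ^ Fintype.card F - Polynomial.X
  have hp0 : p ≠ 0 := FiniteField.X_pow_card_sub_X_ne_zero F Fintype.one_lt_card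
  have hr : p.roots = Finset.univ.val := FiniteField.roots_X_pow_card_sub_X F
  have hs : p.Splits := by
    rw [Polynomial.splits_iff_card_roots, hr,
      FiniteField.X_pow_card_sub_X_natDegree_eq F Fintype.one_lt_card]
    simp
  have h1 := hs.roots_map (algebraMap F L)
  have h2 : y ∈ (p.map (algebraMap F L)).roots := by
    rw [Polynomial.mem_roots (Polynomial.map_ne_zero hp0)]
    simp [p, h]
  rw [h1, hr] at h2
  simpa using h2

/-- For `q = 2^n`, `r = 2`, `k = q + 1`, and `c = 1 + ω^{ak} + ω^{bk} ∈ 𝔽_q`, the cyclotomic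
number `(a,b)_{q-1}` over `𝔽_{q^2}` is `1` if `c = 0`, and otherwise `0` or `2` according as
`Tr_{𝔽_q/𝔽_2}(ω^{ak}/c^2)` is `0` or `1`. -/
theorem cycNum_r_two_char_two {n q : ℕ} (hn : 1 ≤ n) (hq : q = 2 ^ n)
    {K F : Type*} [Field K] [Field F] [Fintype K] [Fintype F] [Algebra K F]
    [Algebra (ZMod 2) K]
    (hK : Fintype.card K = q) (hF : Fintype.card F = q ^ 2)
    (ω : Fˣ) (hω : ∀ x : Fˣ, x ∈ Subgroup.zpowers ω)
    (ζ : K) (hζ : algebraMap K F ζ = (ω : F) ^ (q + 1))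
    (a b : ℕ) (ha : a ≤ q - 2) (hb : b ≤ q - 2) :
    (1 + ζ ^ a + ζ ^ b = 0 → cycNum ω (q - 1) a b = 1) ∧
    (1 + ζ ^ a + ζ ^ b ≠ 0 →
      Algebra.trace (ZMod 2) K (ζ ^ a / (1 + ζ ^ a + ζ ^ b) ^ 2) = 0 →
      cycNum ω (q - 1) a b = 0) ∧
    (1 + ζ ^ a + ζ ^ b ≠ 0 →
      Algebra.trace (ZMod 2) K (ζ ^ a / (1 + ζ ^ a + ζ ^ b) ^ 2) = 1 →
      cycNum ω (q - 1) a b = 2) := by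
  classical
  have hq2 : 2 ≤ q := by rw [hq]; exact Nat.le_self_pow (by omega) 2
  have : CharP K 2 := charP_of_injective_algebraMap (algebraMap (ZMod 2) K).injective 2
  have : CharP F 2 := charP_of_injective_algebraMap (algebraMap K F).injective 2
  have hζ0 : ζ ≠ 0 := by
    rintro rfl
    rw [map_zero] at hζ
    exact pow_ne_zero _ ω.ne_zero hζ.symm
  have hfin : Module.finrank (ZMod 2) K = n := by
    have := Module.card_eq_pow_finrank (K := ZMod 2) (V := K)
    rw [hK, ZMod.card, hq] at this
    exact (Nat.pow_right_injective le_rfl this).symm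
  have htr (d : K) : algebraMap (ZMod 2) K (Algebra.trace (ZMod 2) K d)
      = ∑ i ∈ Finset.range n, d ^ 2 ^ i := by
    rw [FiniteField.algebraMap_trace_eq_sum_pow, hfin]; simp
  set A := ζ ^ a with hA
  set B := ζ ^ b with hB
  set c := 1 + A + B with hc
  have hA0 : A ≠ 0 := pow_ne_zero _ hζ0
  have hB0 : B ≠ 0 := pow_ne_zero _ hζ0
  clear_value A B c
  let φ := algebraMap K F
  have two : (2 : F) = 0 := CharTwo.two_eq_zero
  have frobq (x y : F) : (x + y) ^ q = x ^ q + y ^ q := by rw [hq, add_pow_char_pow]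
  have hmem (x : Fˣ) : (InCycCoset ω (q - 1) a x ∧
      ∃ y : Fˣ, InCycCoset ω (q - 1) b y ∧ (y : F) = (x : F) + 1) ↔
      ((x : F) ^ 2 = φ c * x + φ A ∧ (x : F) ^ q = x + φ c) := by
    simp only [inCos_iff hq2 hF ω hω, ← hζ, ← map_pow, ← hA, ← hB]
    have hcF : φ c = 1 + φ A + φ B := by simp [hc]
    have key : ((x : F) + 1) ^ (q + 1) = x ^ (q + 1) + x ^ q + x + 1 := by
      rw [pow_succ, frobq, pow_succ]; ring
    constructor
    · rintro ⟨h1, y, h2, h3⟩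
      rw [h3, key] at h2
      have h4 : (x : F) ^ q = x + φ c := by
        linear_combination h2 - h1 - hcF + two * (-(x : F) - 1 - φ A)
      refine ⟨?_, h4⟩
      rw [pow_succ, h4] at h1
      linear_combination h1 - two * φ c * x
    · rintro ⟨h1, h4⟩
      have h5 : (x : F) ^ (q + 1) = φ A := by
        rw [pow_succ, h4]; linear_combination h1 + two * φ c * x
      have h6 : ((x : F) + 1) ^ (q + 1) = φ B := by
        rw [key, h5, h4]; linear_combination hcF + two * (x + φ A + 1)
      have h7 : (x : F) + 1 ≠ 0 := by
        intro h
        rw [h, zero_pow (by omega)] at h6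
        exact hB0 (φ.injective (by rw [← h6, map_zero]))
      exact ⟨h5, Units.mk0 _ h7, h6, rfl⟩
  have hcard : cycNum ω (q - 1) a b =
      {x : Fˣ | (x : F) ^ 2 = φ c * x + φ A ∧ (x : F) ^ q = x + φ c}.ncard := by
    rw [cycNum, Nat.card_coe_set_eq]
    congr 1
    ext x
    exact hmem x
  rw [hcard]
  -- the Artin–Schreier reduction
  have hAS (hc0 : c ≠ 0) (x : F) (hx : x ^ 2 = φ c * x + φ A) :
      x ^ q = x + φ c * φ (algebraMap (ZMod 2) K (Algebra.trace (ZMod 2) K (A / c ^ 2))) := by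
    have hc1 : φ c ≠ 0 := (map_ne_zero φ).2 hc0
    have h1 : (x / φ c) ^ 2 = x / φ c + φ (A / c ^ 2) := by
      rw [map_div₀, map_pow, div_pow, hx]; field_simp
    have h2 := as_iter _ _ h1 n
    have h3 : φ c ^ q = φ c := by rw [← map_pow, ← hK, FiniteField.pow_card]
    rw [← hq, div_pow, h3] at h2
    rw [htr, map_sum]
    simp only [map_pow]
    field_simp at h2
    simpa [map_div₀] using h2
  refine ⟨fun h0 => ?_, fun h0 ht => ?_, fun h0 ht => ?_⟩
  · rw [h0, map_zero]
    simp only [zero_mul, zero_add, add_zero]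
    have hs : ∃ s : K, s ^ 2 = A := by
      refine ⟨A ^ 2 ^ (n - 1), ?_⟩
      rw [← pow_mul, ← pow_succ, Nat.sub_add_cancel hn, ← hq, ← hK, FiniteField.pow_card]
    obtain ⟨s, hs⟩ := hs
    have hs0 : φ s ≠ 0 := by
      rw [map_ne_zero]; rintro rfl; exact hA0 (by rw [← hs]; simp)
    rw [Set.ncard_eq_one]
    refine ⟨Units.mk0 _ hs0, ?_⟩
    ext x
    simp only [Set.mem_ofPred_eq, Set.mem_singleton_iff, Units.ext_iff, Units.val_mk0]
    constructor
    · rintro ⟨h, -⟩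
      have : ((x : F) - φ s) ^ 2 = 0 := by
        rw [← hs, map_pow] at h
        linear_combination h + two * (φ s ^ 2 - x * φ s)
      exact sub_eq_zero.1 (pow_eq_zero_iff (by norm_num) |>.1 this)
    · intro h
      rw [h, ← map_pow, ← map_pow, hs, ← hK, FiniteField.pow_card]
      exact ⟨rfl, rfl⟩
  · have hc1 : φ c ≠ 0 := (map_ne_zero φ).2 h0
    rw [Set.ncard_eq_zero, Set.eq_empty_iff_forall_notMem]
    rintro x ⟨h1, h2⟩
    have := hAS h0 x h1
    rw [ht, h2] at this
    simp [hc1] at this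
  · have hc1 : φ c ≠ 0 := (map_ne_zero φ).2 h0
    have hex : ∃ x : F, x ^ 2 = φ c * x + φ A := by
      let L := AlgebraicClosure F
      let d : F := φ (A / c ^ 2)
      obtain ⟨y, hy⟩ := IsAlgClosed.exists_root
        (Polynomial.X ^ 2 + Polynomial.X + Polynomial.C (algebraMap F L d))
        (by rw [show (Polynomial.X ^ 2 + Polynomial.X + Polynomial.C (algebraMap F L d) : Polynomial L).degree = 2 by compute_degree!]; norm_num)
      have : CharP L 2 := charP_of_injective_algebraMap (algebraMap F L).injective 2
      have twoL : (2 : L) = 0 := CharTwo.two_eq_zero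
      have hy' : y ^ 2 = y + algebraMap F L d := by
        simp [Polynomial.IsRoot] at hy
        linear_combination hy - twoL * (y + algebraMap F L d)
      have h1 : y ^ q = y + 1 := by
        have := as_iter _ _ hy' n
        rw [← hq] at this
        rw [this]
        congr 1
        have h2 := congrArg (fun z => algebraMap F L (φ z)) (htr (A / c ^ 2))
        rw [ht] at h2
        simp only [map_one, map_sum, map_pow] at h2
        exact h2.symm
      have h2 : y ^ Fintype.card F = y := by
        rw [hF, sq, pow_mul, h1, hq, add_pow_char_pow, ← hq, h1]
        linear_combination twoL
      obtain ⟨w, hw⟩ := mem_range_of_pow y h2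
      have hw2 : w ^ 2 = w + d := by
        apply (algebraMap F L).injective
        rw [map_pow, map_add, hw, hy']
      refine ⟨φ c * w, ?_⟩
      have hd : φ c ^ 2 * d = φ A := by
        simp only [d, ← map_pow, ← map_mul]; congr 1; field_simp
      linear_combination φ c ^ 2 * hw2 + hd
    obtain ⟨x, hx⟩ := hex
    have hA1 : φ A ≠ 0 := (map_ne_zero φ).2 hA0
    have hx' : (x + φ c) ^ 2 = φ c * (x + φ c) + φ A := by
      linear_combination hx + two * φ c * x
    have nz (z : F) (hz : z ^ 2 = φ c * z + φ A) : z ≠ 0 := by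
      rintro rfl
      apply hA1; linear_combination -hz
    rw [Set.ncard_eq_two]
    refine ⟨Units.mk0 x (nz _ hx), Units.mk0 _ (nz _ hx'), ?_, ?_⟩
    · intro h
      rw [Units.ext_iff] at h
      simp [hc1] at h
    · ext z
      simp only [Set.mem_ofPred_eq, Set.mem_insert_iff, Set.mem_singleton_iff, Units.ext_iff,
        Units.val_mk0]
      have hcl (w : F) (h : w ^ 2 = φ c * w + φ A) : w ^ q = w + φ c := by
        have := hAS h0 w h
        rw [ht] at this
        simpa using this
      constructor
      · rintro ⟨h, -⟩
        have : ((z : F) - x) * (z - (x + φ c)) = 0 := by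
          linear_combination h - hx + two * (x ^ 2 - z * x)
        rcases mul_eq_zero.1 this with h | h
        · left; exact sub_eq_zero.1 h
        · right; exact sub_eq_zero.1 h
      · rintro (h | h) <;> rw [h]
        · exact ⟨hx, hcl _ hx⟩
        · exact ⟨hx', hcl _ hx'⟩
end

section
/- Let q = p^n be a prime power, take r = 2 and k = q + 1. Then for every 0 ≤ a,b ≤ q−2, the cyclotomic number (a,b)_{q−1} over 𝔽_{q^2} belongs to {0, 1, 2}. -/
theorem cyc_pow_aux {q : ℕ} (hq0 : 1 ≤ q) {F : Type*} [Field F] [Fintype F]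
    (hF : Fintype.card F = q ^ 2) (ω : Fˣ) (a : ℕ) (x : Fˣ) (h : InCycCoset ω (q - 1) a x) :
    (x : F) ^ (q + 1) = (ω : F) ^ (a * (q + 1)) := by
  obtain ⟨m, rfl⟩ := h
  have h1 : (ω : F) ^ ((q - 1) * (q + 1)) = 1 := by
    have : (q - 1) * (q + 1) = Fintype.card F - 1 := by
      rw [hF]
      obtain ⟨t, rfl⟩ := Nat.exists_eq_add_of_le hq0
      have e : (1 + t) ^ 2 = t * (t + 2) + 1 := by ring
      rw [e]
      simp
      ring_nf
      simp
    rw [this]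
    exact FiniteField.pow_card_sub_one_eq_one _ ω.ne_zero
  push_cast
  rw [mul_pow, ← pow_mul, ← pow_mul, ← pow_mul]
  have : (q - 1) * (m * (q + 1)) = (q - 1) * (q + 1) * m := by ring
  rw [this, pow_mul (ω : F) ((q - 1) * (q + 1)) m, h1, one_pow, mul_one]

/-- For a prime power `q` and `r = 2`, every cyclotomic number `(a,b)_{q-1}` over `𝔽_{q^2}`
belongs to `{0, 1, 2}`. -/
theorem cycNum_r_two_mem {p n q : ℕ} (hp : p.Prime) (hn : 1 ≤ n) (hq : q = p ^ n)
    {F : Type*} [Field F] [Fintype F] (hF : Fintype.card F = q ^ 2)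
    (ω : Fˣ) (hω : ∀ x : Fˣ, x ∈ Subgroup.zpowers ω)
    (a b : ℕ) (ha : a ≤ q - 2) (hb : b ≤ q - 2) :
    cycNum ω (q - 1) a b ∈ ({0, 1, 2} : Set ℕ) := by
  have hq0 : 1 ≤ q := by rw [hq]; exact Nat.one_le_pow _ _ hp.pos
  have : Fact p.Prime := ⟨hp⟩
  have : CharP F p := charP_of_card_eq_prime_pow (f := n * 2) (by rw [hF, hq, pow_mul])
  have key : ∃ T A : F, ∀ x : Fˣ, (InCycCoset ω (q - 1) a x ∧
      ∃ y : Fˣ, InCycCoset ω (q - 1) b y ∧ (y : F) = (x : F) + 1) →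
      (x : F) * x + A = T * x := by
    refine ⟨(ω : F) ^ (b * (q + 1)) - (ω : F) ^ (a * (q + 1)) - 1, (ω : F) ^ (a * (q + 1)), ?_⟩
    rintro x ⟨hx, y, hy, hyx⟩
    have h1 := cyc_pow_aux hq0 hF ω a x hx
    have h2 := cyc_pow_aux hq0 hF ω b y hy
    have h3 : ((x : F) + 1) ^ q = (x : F) ^ q + 1 := by
      rw [hq, add_pow_char_pow, one_pow]
    rw [hyx, pow_succ, h3] at h2
    rw [← h1, ← h2, pow_succ]
    ring
  obtain ⟨T, A, key⟩ := key
  have hle : cycNum ω (q - 1) a b ≤ 2 := by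
    by_contra! hlt
    unfold cycNum at hlt
    rw [Nat.card_coe_set_eq, Set.two_lt_ncard_iff (Set.toFinite _)] at hlt
    obtain ⟨x, y, z, hx, hy, hz, hxy, hxz, hyz⟩ := hlt
    have kx := key x hx
    have ky := key y hy
    have kz := key z hz
    have nxy : (x : F) - y ≠ 0 := fun h => hxy (Units.ext (sub_eq_zero.mp h))
    have nxz : (x : F) - z ≠ 0 := fun h => hxz (Units.ext (sub_eq_zero.mp h))
    have e1 : (x : F) + y = T := mul_left_cancel₀ nxy (by linear_combination kx - ky)
    have e2 : (x : F) + z = T := mul_left_cancel₀ nxz (by linear_combination kx - kz)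
    exact hyz (Units.ext (by linear_combination e1 - e2))
  simp only [Set.mem_insert_iff, Set.mem_singleton_iff]
  omega
end

section
/- Let q = p^n be a prime power, r ≥ 2 an integer, k = (q^r − 1)/(q − 1), and 0 ≤ a,b ≤ q−2. For u, v ∈ 𝔽_q^×, let W_{u,v}(q,r) = #{(x_1,…,x_r) ∈ (𝔽_q∖{0,1})^r : ∏_{t=1}^r x_t = u and ∏_{t=1}^r (1 − x_t) = v}. Then (a,b)_{q−1} = (q^r + (−1)^r (q−2)^r − 2)/(q−1)^2 + (−1)^{r−1} · W_{(−1)^r ω^{ak}, ω^{bk}}(q,r). -/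
/-- The walk-count `W_{u,v}(q,r)`: the number of `r`-tuples from `𝔽_q ∖ {0,1}` with
`∏ x_t = u` and `∏ (1 - x_t) = v`. -/
noncomputable def walkCount (K : Type*) [Field K] (r : ℕ) (u v : K) : ℕ :=
  Nat.card {f : Fin r → K | (∀ t, f t ≠ 0 ∧ f t ≠ 1) ∧
    (∏ t, f t) = u ∧ (∏ t, (1 - f t)) = v}

open Polynomial

theorem cw_finite_monics (K : Type*) [Field K] [Fintype K] (d : ℕ) :
    {p : K[X] | p.Monic ∧ p.natDegree = d}.Finite := by
  have : Finite {p : K[X] // p.Monic ∧ p.natDegree = d} :=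
    Finite.of_equiv _ (((monicEquivDegreeLT (R := K) d).trans (degreeLTEquiv K d).toEquiv).symm)
  exact this

noncomputable def cwMonics (K : Type*) [Field K] [Fintype K] (d : ℕ) : Finset K[X] :=
  (cw_finite_monics K d).toFinset

theorem cw_mem_monics {K : Type*} [Field K] [Fintype K] {d : ℕ} {p : K[X]} :
    p ∈ cwMonics K d ↔ p.Monic ∧ p.natDegree = d := by simp [cwMonics]

open Classical in
noncomputable def cwIrr (K : Type*) [Field K] [Fintype K] (D : ℕ) : Finset K[X] :=
  ((Finset.range (D+1)).biUnion (cwMonics K)).filter Irreducible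

theorem cw_mem_irr {K : Type*} [Field K] [Fintype K] {D : ℕ} {p : K[X]} :
    p ∈ cwIrr K D ↔ p.Monic ∧ Irreducible p ∧ p.natDegree ≤ D := by
  simp only [cwIrr, Finset.mem_filter, Finset.mem_biUnion, Finset.mem_range, cw_mem_monics]
  constructor
  · rintro ⟨⟨a, h1, h2, h3⟩, h4⟩
    exact ⟨h2, h4, by omega⟩
  · rintro ⟨h1, h2, h3⟩
    exact ⟨⟨_, by omega, h1, rfl⟩, h2⟩

open Classical in
theorem cw_degree_sum {K : Type*} [Field K] [Fintype K] {D : ℕ} {f : K[X]} (hf : f.Monic)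
    (hD : f.natDegree ≤ D) :
    ∑ P ∈ cwIrr K D, ∑ i ∈ Finset.Icc 1 D, (if P ^ i ∣ f then P.natDegree else 0)
      = f.natDegree := by
  have hf0 : f ≠ 0 := hf.ne_zero
  have key : ∀ P ∈ cwIrr K D, ∑ i ∈ Finset.Icc 1 D, (if P ^ i ∣ f then P.natDegree else 0)
      = (UniqueFactorizationMonoid.normalizedFactors f).count P * P.natDegree := by
    intro P hP
    obtain ⟨hm, hi, hd⟩ := cw_mem_irr.1 hP
    have hmul := UniqueFactorizationMonoid.emultiplicity_eq_count_normalizedFactors hi hf0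
    rw [hm.normalize_eq_self] at hmul
    have hdv : ∀ i, P ^ i ∣ f ↔ i ≤ (UniqueFactorizationMonoid.normalizedFactors f).count P := by
      intro i
      rw [pow_dvd_iff_le_emultiplicity, hmul]
      simp
    have hle : (UniqueFactorizationMonoid.normalizedFactors f).count P ≤ D := by
      have h1 := natDegree_le_of_dvd ((hdv _).2 le_rfl) hf0
      rw [natDegree_pow] at h1
      have h2 := hi.natDegree_pos
      nlinarith
    rw [← Finset.sum_filter, Finset.sum_const, smul_eq_mul]
    congr 1
    have : (Finset.Icc 1 D).filter (fun i => P ^ i ∣ f) = 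
      Finset.Icc 1 ((UniqueFactorizationMonoid.normalizedFactors f).count P) := by
      ext i
      simp only [Finset.mem_filter, Finset.mem_Icc, hdv]
      omega
    rw [this]; simp
  rw [Finset.sum_congr rfl key]
  have hmem : ∀ P ∈ UniqueFactorizationMonoid.normalizedFactors f, P.Monic := by
    intro P hP
    have h1 := UniqueFactorizationMonoid.irreducible_of_normalized_factor P hP
    have h2 := UniqueFactorizationMonoid.normalize_normalized_factor P hP
    rw [← h2]
    exact monic_normalize h1.ne_zero
  have hprod : (UniqueFactorizationMonoid.normalizedFactors f).prod = f := by
    have h1 := UniqueFactorizationMonoid.prod_normalizedFactors hf0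
    have h2 := monic_multiset_prod_of_monic _ (fun P => P) hmem
    rw [Multiset.map_id'] at h2
    exact eq_of_monic_of_associated h2 hf h1
  have hdeg : f.natDegree = ((UniqueFactorizationMonoid.normalizedFactors f).map natDegree).sum := by
    conv_lhs => rw [← hprod]
    exact natDegree_multiset_prod_of_monic _ hmem
  rw [hdeg, Finset.sum_multiset_map_count]
  simp only [smul_eq_mul]
  symm
  apply Finset.sum_subset
  · intro P hP
    rw [Multiset.mem_toFinset] at hP
    refine cw_mem_irr.2 ⟨hmem P hP, UniqueFactorizationMonoid.irreducible_of_normalized_factor P hP, ?_⟩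
    exact (natDegree_le_of_dvd (UniqueFactorizationMonoid.dvd_of_mem_normalizedFactors hP) hf0).trans hD
  · intro P _ hP
    rw [Multiset.mem_toFinset] at hP
    simp [Multiset.count_eq_zero_of_notMem hP]

noncomputable def cwL {K R : Type*} [Field K] [Fintype K] [CommRing R] (lam : K[X] →* R) (d : ℕ) : R :=
  ∑ f ∈ cwMonics K d, lam f

noncomputable def cwN {K R : Type*} [Field K] [Fintype K] [CommRing R] (lam : K[X] →* R) (D j : ℕ) : R :=
  ∑ P ∈ cwIrr K D, ∑ i ∈ Finset.Icc 1 D,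
    if i * P.natDegree = j then (P.natDegree : R) * lam P ^ i else 0

open Classical in
theorem cw_sum_dvd {K R : Type*} [Field K] [Fintype K] [CommRing R] (lam : K[X] →* R) (d : ℕ)
    (Q : K[X]) (hQ : Q.Monic) :
    ∑ f ∈ cwMonics K d, (if Q ∣ f then lam f else 0) =
      if Q.natDegree ≤ d then lam Q * cwL lam (d - Q.natDegree) else 0 := by
  rw [← Finset.sum_filter]
  split_ifs with h
  · rw [cwL, Finset.mul_sum]
    symm
    refine Finset.sum_bij (fun g _ => Q * g) ?_ ?_ ?_ ?_
    · intro g hg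
      rw [cw_mem_monics] at hg
      rw [Finset.mem_filter, cw_mem_monics]
      refine ⟨⟨hQ.mul hg.1, ?_⟩, dvd_mul_right _ _⟩
      rw [hQ.natDegree_mul hg.1, hg.2]; omega
    · intro a _ b _ hab
      exact mul_left_cancel₀ hQ.ne_zero hab
    · intro f hf
      rw [Finset.mem_filter, cw_mem_monics] at hf
      obtain ⟨⟨h1, h2⟩, g, rfl⟩ := hf
      have hg : g.Monic := hQ.of_mul_monic_left h1
      refine ⟨g, cw_mem_monics.2 ⟨hg, ?_⟩, rfl⟩
      rw [hQ.natDegree_mul hg] at h2; omega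
    · intro g _; rw [map_mul]
  · rw [Finset.filter_eq_empty_iff.2, Finset.sum_empty]
    intro f hf hdv
    rw [cw_mem_monics] at hf
    exact h (hf.2 ▸ natDegree_le_of_dvd hdv hf.1.ne_zero)

theorem cw_recur {K R : Type*} [Field K] [Fintype K] [CommRing R] (lam : K[X] →* R) (D d : ℕ)
    (hd : d ≤ D) :
    (d : R) * cwL lam d = ∑ j ∈ Finset.Icc 1 d, cwN lam D j * cwL lam (d - j) := by
  classical
  have h1 : (d : R) * cwL lam d = ∑ f ∈ cwMonics K d, ∑ P ∈ cwIrr K D, ∑ i ∈ Finset.Icc 1 D,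
      (P.natDegree : R) * (if P ^ i ∣ f then lam f else 0) := by
    rw [cwL, Finset.mul_sum]
    refine Finset.sum_congr rfl fun f hf => ?_
    rw [cw_mem_monics] at hf
    have := cw_degree_sum hf.1 (hf.2.le.trans hd)
    rw [hf.2] at this
    conv_lhs => rw [← this]
    push_cast
    rw [Finset.sum_mul]
    refine Finset.sum_congr rfl fun P _ => ?_
    rw [Finset.sum_mul]
    refine Finset.sum_congr rfl fun i _ => ?_
    split_ifs <;> simp
  rw [h1, Finset.sum_comm]
  simp only [cwN, Finset.sum_mul]
  rw [Finset.sum_comm (s := Finset.Icc 1 d)]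
  refine Finset.sum_congr rfl fun P hP => ?_
  rw [Finset.sum_comm, Finset.sum_comm (s := Finset.Icc 1 d)]
  refine Finset.sum_congr rfl fun i hi => ?_
  obtain ⟨hm, hirr, _⟩ := cw_mem_irr.1 hP
  rw [← Finset.mul_sum, cw_sum_dvd lam d _ (hm.pow i), natDegree_pow]
  simp only [ite_mul, zero_mul, Finset.sum_ite_eq, map_pow]
  have h2 := hirr.natDegree_pos
  have h3 : 1 ≤ i * P.natDegree := Nat.mul_pos (Finset.mem_Icc.1 hi).1 h2
  by_cases h : i * P.natDegree ≤ d
  · rw [if_pos h, if_pos (Finset.mem_Icc.2 ⟨h3, h⟩)]; ring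
  · rw [if_neg h, if_neg (fun h' => h (Finset.mem_Icc.1 h').2)]; ring

theorem cw_modI {K R : Type*} [Field K] [Fintype K] [CommRing R] (lam : K[X] →* R) (D : ℕ)
    (I : Ideal R) (hL : ∀ d, 2 ≤ d → cwL lam d ∈ I) (d : ℕ) (hd : d + 1 ≤ D) :
    cwN lam D (d+1) - (-1) ^ d * cwL lam 1 ^ (d+1) ∈ I := by
  have h0 : cwL lam 0 = 1 := by
    have : cwMonics K 0 = {1} := by
      ext f
      rw [cw_mem_monics, Finset.mem_singleton]
      constructor
      · rintro ⟨h1, h2⟩; exact (Polynomial.Monic.natDegree_eq_zero h1).1 h2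
      · rintro rfl; simp
    simp [cwL, this]
  induction d with
  | zero =>
    have := cw_recur lam D 1 hd
    simp [h0] at this
    simp [← this]
  | succ d ih =>
    have ih := ih (by omega)
    have hr := cw_recur lam D (d+2) (by omega)
    have e : Finset.Icc 1 (d+2) = insert (d+2) (insert (d+1) (Finset.Icc 1 d)) := by
      ext; simp; omega
    rw [e, Finset.sum_insert (by simp), Finset.sum_insert (by simp)] at hr
    have hS : ∑ j ∈ Finset.Icc 1 d, cwN lam D j * cwL lam (d + 2 - j) ∈ I := by
      refine I.sum_mem fun j hj => I.mul_mem_left _ (hL _ ?_)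
      have := Finset.mem_Icc.1 hj
      omega
    have e2 : d + 2 - (d + 1) = 1 := by omega
    rw [e2, Nat.sub_self, h0, mul_one] at hr
    have : cwN lam D (d+1+1) - (-1) ^ (d+1) * cwL lam 1 ^ (d+1+1) =
      ((d + 2 : ℕ) : R) * cwL lam (d+2) - ∑ j ∈ Finset.Icc 1 d, cwN lam D j * cwL lam (d + 2 - j)
       - (cwN lam D (d+1) - (-1) ^ d * cwL lam 1 ^ (d+1)) * cwL lam 1 := by
      rw [hr]; ring
    rw [this]
    exact I.sub_mem (I.sub_mem (I.mul_mem_left _ (hL _ (by omega))) hS) (I.mul_mem_right _ ih)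

theorem cw_card_fiber {K F : Type*} [Field K] [Field F] [Fintype K] [Fintype F] [Algebra K F]
    (P : K[X]) (hm : P.Monic) (hi : Irreducible P) (hd : P.natDegree ∣ Module.finrank K F) :
    Nat.card {x : F // minpoly K x = P} = P.natDegree := by
  have := Fact.mk hi
  have hP := hm.ne_zero
  have : Module.Finite K (AdjoinRoot P) := (AdjoinRoot.powerBasis hP).finite
  have : Finite (AdjoinRoot P) := Module.finite_of_finite K
  have hfr : Module.finrank K (AdjoinRoot P) = P.natDegree := by
    rw [(AdjoinRoot.powerBasis hP).finrank, AdjoinRoot.powerBasis_dim]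
  have h := FiniteField.natCard_algHom_of_finrank_dvd (F := K) (K := AdjoinRoot P) (L := F)
    (by rw [hfr]; exact hd)
  rw [hfr] at h
  rw [← h]
  refine Nat.card_congr (Equiv.trans (Equiv.subtypeEquivRight fun x => ?_)
    (AdjoinRoot.equiv F K P hP).symm)
  rw [mem_aroots]
  constructor
  · rintro rfl; exact ⟨hP, minpoly.aeval _ _⟩
  · rintro ⟨_, h⟩; exact (minpoly.eq_of_irreducible_of_monic hi h hm).symm

theorem cw_N_eq {K F R : Type*} [Field K] [Field F] [Fintype K] [Fintype F] [Algebra K F]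
    [CommRing R] (lam : K[X] →* R) (r : ℕ) (hr : Module.finrank K F = r) (hr0 : 0 < r) :
    cwN lam r r = ∑ x : F, lam (minpoly K x) ^ (r / (minpoly K x).natDegree) := by
  classical
  have hint : ∀ x : F, IsIntegral K x := fun x => Algebra.IsIntegral.isIntegral x
  have hdvd : ∀ x : F, (minpoly K x).natDegree ∣ r := fun x => hr ▸ minpoly.degree_dvd (hint x)
  have hmaps : ∀ x ∈ (Finset.univ : Finset F), minpoly K x ∈ cwIrr K r := fun x _ =>
    cw_mem_irr.2 ⟨minpoly.monic (hint x), minpoly.irreducible (hint x), Nat.le_of_dvd hr0 (hdvd x)⟩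
  rw [← Finset.sum_fiberwise_of_maps_to hmaps, cwN]
  refine Finset.sum_congr rfl fun P hP => ?_
  obtain ⟨hm, hi, hle⟩ := cw_mem_irr.1 hP
  have hpos := hi.natDegree_pos
  have h1 : ∑ x ∈ Finset.univ.filter (fun x : F => minpoly K x = P),
      lam (minpoly K x) ^ (r / (minpoly K x).natDegree) =
      ((Finset.univ.filter (fun x : F => minpoly K x = P)).card : R) *
        lam P ^ (r / P.natDegree) := by
    rw [← nsmul_eq_mul, ← Finset.sum_const]
    refine Finset.sum_congr rfl fun x hx => ?_
    rw [(Finset.mem_filter.1 hx).2]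
  rw [h1]
  by_cases hd : P.natDegree ∣ r
  · have hc := cw_card_fiber (F := F) P hm hi (hr ▸ hd)
    rw [Nat.card_eq_fintype_card, Fintype.card_subtype] at hc
    rw [hc]
    obtain ⟨e, he⟩ := hd
    have hdiv : r / P.natDegree = e := by rw [he]; exact Nat.mul_div_cancel_left _ hpos
    have he0 : 1 ≤ e := by
      rcases Nat.eq_zero_or_pos e with h | h
      · subst h; omega
      · exact h
    rw [hdiv, Finset.sum_eq_single e, if_pos (by rw [he, mul_comm])]
    · intro i _ hne
      rw [if_neg]
      intro h
      apply hne
      rw [he, mul_comm] at h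
      exact Nat.eq_of_mul_eq_mul_left hpos h
    · intro h
      exfalso
      apply h
      rw [Finset.mem_Icc]
      refine ⟨he0, ?_⟩
      rw [he]; nlinarith
  · rw [Finset.sum_eq_zero, Finset.filter_eq_empty_iff.2]
    · simp
    · intro x _ h; exact hd (h ▸ hdvd x)
    · intro i _
      rw [if_neg]
      rintro h
      exact hd ⟨i, by rw [← h, mul_comm]⟩

theorem cw_norm {K F : Type*} [Field K] [Field F] [Fintype K] [Fintype F] [Algebra K F]
    (r : ℕ) (hr : Module.finrank K F = r) (x : F) (c : K) :
    (minpoly K x).eval c ^ (r / (minpoly K x).natDegree) = Algebra.norm K (algebraMap K F c - x) := by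
  have hy : ∀ y : F, (minpoly K y).eval 0 ^ (r / (minpoly K y).natDegree) = Algebra.norm K (-y) := by
    intro y
    have hint : IsIntegral K y := Algebra.IsIntegral.isIntegral y
    have h1 := Algebra.norm_eq_norm_adjoin K y
    have h2 := Algebra.PowerBasis.norm_gen_eq_coeff_zero_minpoly
      (IntermediateField.adjoin.powerBasis hint)
    rw [IntermediateField.adjoin.powerBasis_gen, IntermediateField.adjoin.powerBasis_dim,
      IntermediateField.minpoly_gen] at h2
    have h3 : (minpoly K y).natDegree * Module.finrank (IntermediateField.adjoin K {y}) F = r := by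
      rw [← hr, ← IntermediateField.adjoin.finrank hint]
      exact Module.finrank_mul_finrank _ _ _
    have h4 : r / (minpoly K y).natDegree = Module.finrank (IntermediateField.adjoin K {y}) F := by
      rw [← h3]; exact Nat.mul_div_cancel_left _ (minpoly.natDegree_pos hint)
    have h5 : Algebra.norm K (-1 : F) = (-1) ^ r := by
      have := Algebra.norm_algebraMap (S := F) (-1 : K)
      rw [hr] at this
      rw [← this]; simp
    rw [neg_eq_neg_one_mul, map_mul, h5, h1, h2, mul_pow, ← pow_mul, h3, h4, ← mul_assoc,
      ← mul_pow, coeff_zero_eq_eval_zero]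
    simp
  have := hy (x - algebraMap K F c)
  rw [minpoly.sub_algebraMap, natDegree_comp, natDegree_X_add_C, mul_one, eval_comp] at this
  simpa using this

abbrev CwR (K : Type*) [Field K] := MonoidAlgebra ℤ (Kˣ × Kˣ)

open Classical in
noncomputable def cwSing {K : Type*} [Field K] (u v : K) : CwR K :=
  if h : u ≠ 0 ∧ v ≠ 0 then MonoidAlgebra.single (Units.mk0 u h.1, Units.mk0 v h.2) 1 else 0

theorem cwSing_mul {K : Type*} [Field K] (u v u' v' : K) :
    cwSing (u * u') (v * v') = cwSing u v * cwSing u' v' := by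
  unfold cwSing
  by_cases h : u ≠ 0 ∧ v ≠ 0
  · by_cases h' : u' ≠ 0 ∧ v' ≠ 0
    · rw [dif_pos h, dif_pos h', dif_pos ⟨mul_ne_zero h.1 h'.1, mul_ne_zero h.2 h'.2⟩,
        MonoidAlgebra.single_mul_single]
      simp [Units.mk0_mul]
    · rw [dif_neg h', mul_zero, dif_neg]
      intro h2
      exact h' ⟨right_ne_zero_of_mul h2.1, right_ne_zero_of_mul h2.2⟩
  · rw [dif_neg h, zero_mul, dif_neg]
    intro h2
    exact h ⟨left_ne_zero_of_mul h2.1, left_ne_zero_of_mul h2.2⟩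

theorem cwSing_one {K : Type*} [Field K] : cwSing (1 : K) 1 = 1 := by
  unfold cwSing
  rw [dif_pos ⟨one_ne_zero, one_ne_zero⟩, MonoidAlgebra.one_def]
  congr 1
  ext <;> simp

noncomputable def cwSingHom (K : Type*) [Field K] : K × K →* CwR K where
  toFun w := cwSing w.1 w.2
  map_one' := cwSing_one
  map_mul' _ _ := cwSing_mul _ _ _ _

noncomputable def cwLam (K : Type*) [Field K] : K[X] →* CwR K where
  toFun f := cwSing (f.eval 0) (f.eval 1)
  map_one' := by simp [cwSing_one]
  map_mul' _ _ := by simp [cwSing_mul]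

open Classical in
theorem cwSing_coeff {K : Type*} [Field K] (u v : K) (U V : Kˣ) :
    (cwSing u v).coeff (U, V) = if u = U ∧ v = V then 1 else 0 := by
  unfold cwSing
  by_cases h : u ≠ 0 ∧ v ≠ 0
  · rw [dif_pos h, MonoidAlgebra.coeff_single, Finsupp.single_apply]
    simp [Units.ext_iff]
  · rw [dif_neg h, if_neg]
    · simp
    · rintro ⟨rfl, rfl⟩; exact h ⟨U.ne_zero, V.ne_zero⟩

noncomputable def cwEps (K : Type*) [Field K] : CwR K →ₐ[ℤ] ℤ :=
  MonoidAlgebra.lift ℤ ℤ (Kˣ × Kˣ) 1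

open Classical in
theorem cwEps_sing {K : Type*} [Field K] (u v : K) :
    cwEps K (cwSing u v) = if u ≠ 0 ∧ v ≠ 0 then 1 else 0 := by
  unfold cwSing cwEps
  by_cases h : u ≠ 0 ∧ v ≠ 0
  · rw [dif_pos h, if_pos h, MonoidAlgebra.lift_single]; simp
  · rw [dif_neg h, if_neg h, map_zero]

noncomputable def cwS (K : Type*) [Field K] [Fintype K] : CwR K := ∑ w : K × K, cwSing w.1 w.2

theorem cwS_mul {K : Type*} [Field K] [Fintype K] (t : CwR K) :
    cwS K * t = cwEps K t • cwS K := by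
  induction t using MonoidAlgebra.induction_linear with
  | zero => simp
  | add x y hx hy => rw [mul_add, hx, hy, map_add, add_smul]
  | single g a =>
    have h1 : (MonoidAlgebra.single g a : CwR K) = a • cwSing (g.1 : K) (g.2 : K) := by
      unfold cwSing
      rw [dif_pos ⟨g.1.ne_zero, g.2.ne_zero⟩]
      simp
    rw [h1, map_smul, cwEps_sing, if_pos ⟨g.1.ne_zero, g.2.ne_zero⟩, mul_smul_comm]
    simp only [smul_eq_mul, mul_one]
    congr 1
    rw [cwS, Finset.sum_mul]
    simp only [← cwSing_mul]
    exact Fintype.sum_equiv ((Equiv.mulRight₀ (g.1 : K) g.1.ne_zero).prodCongr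
      (Equiv.mulRight₀ (g.2 : K) g.2.ne_zero)) _ _ (fun w => by simp)

theorem cwL_mem {K : Type*} [Field K] [Fintype K] (d : ℕ) (hd : 2 ≤ d) :
    cwL (cwLam K) d ∈ Ideal.span {cwS K} := by
  classical
  have hcard : ∀ w : K × K,
      ((cwMonics K d).filter (fun f => (f.eval 0, f.eval 1) = w)).card =
      ((cwMonics K d).filter (fun f => (f.eval 0, f.eval 1) = ((0 : K), (0 : K)))).card := by
    rintro ⟨u, v⟩
    have hdeg : ∀ (f : K[X]) (a b : K), f ∈ cwMonics K d → f + (C a * X + C b) ∈ cwMonics K d := by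
      intro f a b hf
      rw [cw_mem_monics] at hf ⊢
      have h1 : (C a * X + C b).degree < f.degree := by
        refine lt_of_le_of_lt degree_linear_le ?_
        rw [degree_eq_natDegree hf.1.ne_zero, hf.2]
        exact_mod_cast hd
      exact ⟨hf.1.add_of_left h1, by rw [natDegree_add_eq_left_of_degree_lt h1, hf.2]⟩
    refine Finset.card_bij' (fun f _ => f + (C (-(v - u)) * X + C (-u)))
      (fun f _ => f + (C (v - u) * X + C u)) ?_ ?_ ?_ ?_
    · intro f hf
      rw [Finset.mem_filter] at hf ⊢
      refine ⟨hdeg _ _ _ hf.1, ?_⟩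
      have := hf.2
      simp only [Prod.mk.injEq] at this
      simp [this.1, this.2]
      try ring
    · intro f hf
      rw [Finset.mem_filter] at hf ⊢
      refine ⟨hdeg _ _ _ hf.1, ?_⟩
      have := hf.2
      simp only [Prod.mk.injEq] at this
      simp [this.1, this.2]
    · intro f _; simp only [C_neg]; ring
    · intro f _; simp only [C_neg]; ring
  have : cwL (cwLam K) d =
      ((cwMonics K d).filter (fun f => (f.eval 0, f.eval 1) = ((0 : K), (0 : K)))).card • cwS K := by
    rw [cwL, ← Finset.sum_fiberwise (cwMonics K d) (fun f => (f.eval 0, f.eval 1)), cwS,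
      Finset.smul_sum]
    refine Finset.sum_congr rfl fun w _ => ?_
    rw [← hcard w, ← Finset.sum_const]
    refine Finset.sum_congr rfl fun f hf => ?_
    rw [← (Finset.mem_filter.1 hf).2]
    rfl
  rw [this]
  rw [nsmul_eq_mul]
  exact Ideal.mul_mem_left _ _ (Ideal.subset_span rfl)

theorem cwL_one {K : Type*} [Field K] [Fintype K] :
    cwL (cwLam K) 1 = ∑ c : K, cwSing (-c) (1 - c) := by
  rw [cwL]
  symm
  refine Finset.sum_bij (fun c _ => X - C c) ?_ ?_ ?_ ?_
  · intro c _; exact cw_mem_monics.2 ⟨monic_X_sub_C c, natDegree_X_sub_C c⟩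
  · intro a _ b _ h
    have := congrArg (eval 0) h
    simpa using this
  · intro f hf
    rw [cw_mem_monics] at hf
    refine ⟨- f.coeff 0, Finset.mem_univ _, ?_⟩
    have := hf.1.eq_X_add_C hf.2
    rw [C_neg, sub_neg_eq_add]; exact this.symm
  · intro c _; simp [cwLam]

open Classical in
theorem cw_card2 (E : Type*) [Field E] [Fintype E] :
    (∑ c : E, if c ≠ 0 ∧ 1 - c ≠ 0 then (1 : ℤ) else 0) = (Fintype.card E : ℤ) - 2 := by
  rw [← Finset.sum_filter, Finset.sum_const, nsmul_eq_mul, mul_one]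
  have e : (Finset.univ.filter fun c : E => c ≠ 0 ∧ 1 - c ≠ 0) = ({0, 1} : Finset E)ᶜ := by
    ext c
    simp only [Finset.mem_filter, Finset.mem_univ, true_and, Finset.mem_compl, Finset.mem_insert,
      Finset.mem_singleton, ne_eq, sub_eq_zero, not_or, eq_comm (a := (1 : E))]
  rw [e, Finset.card_compl, Finset.card_pair zero_ne_one, Nat.cast_sub]
  · rfl
  · exact Fintype.one_lt_card

open Classical in
theorem cw_main {K F : Type*} [Field K] [Field F] [Fintype K] [Fintype F] [Algebra K F]
    (m : ℕ) (hr : Module.finrank K F = m + 1) (U V : Kˣ) :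
    (((Finset.univ.filter fun x : F => Algebra.norm K (-x) = U ∧ Algebra.norm K (1 - x) = V).card : ℤ)
      - (-1) ^ m * ((Finset.univ.filter fun f : Fin (m+1) → K =>
          ∏ t, (- f t) = U ∧ ∏ t, (1 - f t) = V).card : ℤ)) * ((Fintype.card K : ℤ) - 1) ^ 2
      = ((Fintype.card F : ℤ) - 2) - (-1) ^ m * ((Fintype.card K : ℤ) - 2) ^ (m + 1) := by
  have hN : cwN (cwLam K) (m+1) (m+1) =
      ∑ x : F, cwSing (Algebra.norm K (-x)) (Algebra.norm K (1 - x)) := by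
    rw [cw_N_eq (F := F) (cwLam K) (m+1) hr (by omega)]
    refine Finset.sum_congr rfl fun x _ => ?_
    have h0 := cw_norm (m+1) hr x 0
    have h1 := cw_norm (m+1) hr x 1
    rw [map_zero, zero_sub] at h0
    rw [map_one] at h1
    rw [← h0, ← h1]
    exact (map_pow (cwSingHom K) (eval 0 (minpoly K x), eval 1 (minpoly K x)) _).symm
  have hA : cwL (cwLam K) 1 ^ (m+1) =
      ∑ f : Fin (m+1) → K, cwSing (∏ t, (- f t)) (∏ t, (1 - f t)) := by
    rw [cwL_one, Fintype.sum_pow]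
    refine Finset.sum_congr rfl fun f _ => ?_
    have := map_prod (cwSingHom K) (fun t => (- f t, 1 - f t)) Finset.univ
    rw [show (∏ t, (- f t, 1 - f t)) = (∏ t, (- f t), ∏ t, (1 - f t)) from
      Prod.ext (by simp [Prod.fst_prod]) (by simp [Prod.snd_prod])] at this
    exact this.symm
  have hmem := cw_modI (cwLam K) (m+1) (Ideal.span {cwS K}) (fun d hd => cwL_mem d hd) m le_rfl
  obtain ⟨t, ht⟩ := Ideal.mem_span_singleton.1 hmem
  rw [cwS_mul] at ht
  have hpow : ((-1 : CwR K)) ^ m * cwL (cwLam K) 1 ^ (m+1) =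
      ((-1 : ℤ) ^ m) • cwL (cwLam K) 1 ^ (m+1) := by
    rw [zsmul_eq_mul]; push_cast; rfl
  have he : cwEps K (cwS K) = ((Fintype.card K : ℤ) - 1) ^ 2 := by
    rw [cwS, map_sum]
    simp only [cwEps_sing]
    rw [← Finset.sum_filter, Finset.sum_const, nsmul_eq_mul, mul_one]
    have e : (Finset.univ.filter fun c : K × K => c.1 ≠ 0 ∧ c.2 ≠ 0) =
        ({0} : Finset K)ᶜ ×ˢ ({0} : Finset K)ᶜ := by
      ext c; simp
    rw [e, Finset.card_product, Finset.card_compl, Finset.card_singleton, Nat.cast_mul,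
      Nat.cast_sub Fintype.card_pos]
    push_cast; ring
  have hEN : cwEps K (cwN (cwLam K) (m+1) (m+1)) = (Fintype.card F : ℤ) - 2 := by
    have : Module.Finite K F := Module.finite_of_finrank_pos (by omega)
    rw [hN, map_sum, ← cw_card2 F]
    simp only [cwEps_sing]
    refine Finset.sum_congr rfl fun x _ => ?_
    simp only [ne_eq, neg_eq_zero, Algebra.norm_eq_zero_iff]
  have hEA : cwEps K (cwL (cwLam K) 1) = (Fintype.card K : ℤ) - 2 := by
    rw [cwL_one, map_sum, ← cw_card2 K]
    simp only [cwEps_sing]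
    refine Finset.sum_congr rfl fun x _ => ?_
    simp only [ne_eq, neg_eq_zero]
  rw [hpow] at ht
  have ht1 := congrArg (cwEps K) ht
  rw [map_sub, map_smul, map_pow, map_smul, hEN, hEA, he] at ht1
  have ht2 := congrArg (fun z : CwR K => z.coeff (U, V)) ht
  have hcS : (cwS K).coeff (U, V) = 1 := by
    rw [cwS, MonoidAlgebra.coeff_sum, Finset.sum_apply']
    simp only [cwSing_coeff]
    rw [Finset.sum_eq_single ((U : K), (V : K))]
    · simp
    · intro w _ hw
      rw [if_neg]
      rintro ⟨h1, h2⟩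
      exact hw (Prod.ext h1 h2)
    · simp
  have hcN : (cwN (cwLam K) (m+1) (m+1)).coeff (U, V) =
      ((Finset.univ.filter fun x : F =>
        Algebra.norm K (-x) = U ∧ Algebra.norm K (1 - x) = V).card : ℤ) := by
    rw [hN, MonoidAlgebra.coeff_sum, Finset.sum_apply']
    simp only [cwSing_coeff]
    rw [Finset.sum_boole]
  have hcA : (cwL (cwLam K) 1 ^ (m+1)).coeff (U, V) =
      ((Finset.univ.filter fun f : Fin (m+1) → K =>
          ∏ t, (- f t) = U ∧ ∏ t, (1 - f t) = V).card : ℤ) := by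
    rw [hA, MonoidAlgebra.coeff_sum, Finset.sum_apply']
    simp only [cwSing_coeff]
    rw [Finset.sum_boole]
  simp only [MonoidAlgebra.coeff_sub, MonoidAlgebra.coeff_smul, Finsupp.sub_apply,
    Finsupp.smul_apply, smul_eq_mul] at ht2
  rw [hcS, hcN, hcA] at ht2
  rw [ht2, mul_one]
  simpa [smul_eq_mul] using ht1.symm

theorem cw_coset {q r k : ℕ} (hr : 2 ≤ r) (hk : k = (q ^ r - 1) / (q - 1))
    {K F : Type*} [Field K] [Field F] [Fintype K] [Fintype F] [Algebra K F]
    (hK : Fintype.card K = q) (hF : Fintype.card F = q ^ r)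
    (ω : Fˣ) (hω : ∀ x : Fˣ, x ∈ Subgroup.zpowers ω)
    (ζ : K) (hζ : algebraMap K F ζ = (ω : F) ^ k) (a : ℕ) (x : Fˣ) :
    InCycCoset ω (q - 1) a x ↔ Algebra.norm K (x : F) = ζ ^ a := by
  have hq2 : 2 ≤ q := hK ▸ Fintype.one_lt_card
  have hkq : k * (q - 1) = q ^ r - 1 := by
    rw [hk]
    apply Nat.div_mul_cancel
    simpa using Nat.sub_dvd_pow_sub_pow q 1 r
  have hk0 : 0 < k := by
    rcases Nat.eq_zero_or_pos k with h | h
    · rw [h, zero_mul] at hkq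
      have : 2 ≤ q ^ r := hq2.trans (Nat.le_self_pow (by omega) q)
      omega
    · exact h
  have hord : orderOf ω = k * (q - 1) := by
    rw [orderOf_eq_card_of_forall_mem_zpowers hω, Nat.card_units, Nat.card_eq_fintype_card, hF, hkq]
  have hnorm : Algebra.norm K (x : F) = ζ ^ a ↔ x ^ k = (ω ^ a) ^ k := by
    rw [← (algebraMap K F).injective.eq_iff, FiniteField.algebraMap_norm_eq_pow,
      Nat.card_eq_fintype_card, Nat.card_eq_fintype_card, hF, hK, ← hk, map_pow, hζ,
      Units.ext_iff, ← pow_mul, mul_comm k a, pow_mul]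
    simp
  rw [hnorm]
  constructor
  · rintro ⟨m, rfl⟩
    have : ((ω ^ (q - 1)) ^ m) ^ k = 1 := by
      rw [← pow_mul, ← pow_mul, show (q - 1) * (m * k) = k * (q - 1) * m by ring, pow_mul, ← hord,
        pow_orderOf_eq_one, one_pow]
    rw [mul_pow, this, mul_one]
  · intro h
    have hy : (x / ω ^ a) ^ k = 1 := by rw [div_pow, h, div_self']
    have hmem : x / ω ^ a ∈ Submonoid.powers ω :=
      (isOfFinOrder_of_finite ω).mem_powers_iff_mem_zpowers.2 (hω _)
    obtain ⟨i, hi⟩ := hmem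
    try simp only at hi
    rw [← hi, ← pow_mul] at hy
    have hdv := orderOf_dvd_of_pow_eq_one hy
    rw [hord, mul_comm i k] at hdv
    obtain ⟨m, hm⟩ := Nat.dvd_of_mul_dvd_mul_left hk0 hdv
    refine ⟨m, ?_⟩
    rw [← pow_mul, ← hm, hi, mul_div_cancel]


/-- The Cayley-digraph formula for the cyclotomic number:
`(a,b)_{q-1} = (q^r + (-1)^r (q-2)^r - 2)/(q-1)^2 + (-1)^{r-1} W_{(-1)^r ω^{ak}, ω^{bk}}(q,r)`,
where `ζ = ω^k` viewed in `𝔽_q`. -/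
theorem cycNum_eq_walkCount {p n q r k : ℕ} (hp : p.Prime) (hn : 1 ≤ n) (hq : q = p ^ n)
    (hr : 2 ≤ r) (hk : k = (q ^ r - 1) / (q - 1))
    {K F : Type*} [Field K] [Field F] [Fintype K] [Fintype F] [Algebra K F]
    (hK : Fintype.card K = q) (hF : Fintype.card F = q ^ r)
    (ω : Fˣ) (hω : ∀ x : Fˣ, x ∈ Subgroup.zpowers ω)
    (ζ : K) (hζ : algebraMap K F ζ = (ω : F) ^ k)
    (a b : ℕ) (ha : a ≤ q - 2) (hb : b ≤ q - 2) :
    (cycNum ω (q - 1) a b : ℝ) =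
      ((q : ℝ) ^ r + (-1 : ℝ) ^ r * ((q : ℝ) - 2) ^ r - 2) / ((q : ℝ) - 1) ^ 2 +
        (-1 : ℝ) ^ (r - 1) * (walkCount K r ((-1 : K) ^ r * ζ ^ a) (ζ ^ b) : ℝ) := by
  classical
  have hq2 : 2 ≤ q := hK ▸ Fintype.one_lt_card
  have hfr : Module.finrank K F = r := by
    have h := Module.card_eq_pow_finrank (K := K) (V := F)
    rw [hF, hK] at h
    exact (Nat.pow_right_injective hq2 h).symm
  obtain ⟨m, rfl⟩ : ∃ m, r = m + 1 := ⟨r - 1, by omega⟩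
  have hζ0 : ζ ≠ 0 := by
    rintro rfl
    rw [map_zero] at hζ
    exact pow_ne_zero k ω.ne_zero hζ.symm
  have hco := cw_coset hr hk hK hF ω hω ζ hζ
  have hmain := cw_main (F := F) m hfr (Units.mk0 ζ hζ0 ^ a) (Units.mk0 ζ hζ0 ^ b)
  simp only [Units.val_pow_eq_pow_val, Units.val_mk0] at hmain
  have hc : cycNum ω (q - 1) a b = (Finset.univ.filter fun x : F =>
      Algebra.norm K (-x) = ζ ^ a ∧ Algebra.norm K (1 - x) = ζ ^ b).card := by
    unfold cycNum
    rw [← Fintype.card_subtype, ← Nat.card_eq_fintype_card]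
    refine Nat.card_congr (Equiv.ofBijective (fun x => ⟨-((x : Fˣ) : F), ?_⟩) ⟨?_, ?_⟩)
    · obtain ⟨x, h1, y, h2, h3⟩ := x
      rw [hco] at h1 h2
      rw [h3, add_comm] at h2
      rw [neg_neg, sub_neg_eq_add]
      exact ⟨h1, h2⟩
    · intro x y hxy
      have := congrArg Subtype.val hxy
      exact Subtype.ext (Units.ext (neg_injective this))
    · rintro ⟨z, h1, h2⟩
      have hz : -z ≠ 0 := by
        intro h
        rw [h, Algebra.norm_zero] at h1
        exact pow_ne_zero a hζ0 h1.symm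
      have hz1 : 1 - z ≠ 0 := by
        intro h
        rw [h, Algebra.norm_zero] at h2
        exact pow_ne_zero b hζ0 h2.symm
      refine ⟨⟨Units.mk0 (-z) hz, (hco _ _).2 h1, Units.mk0 (1 - z) hz1, (hco _ _).2 h2, ?_⟩, ?_⟩
      · simp only [Units.val_mk0]; ring
      · simp
  have hw : walkCount K (m + 1) ((-1 : K) ^ (m + 1) * ζ ^ a) (ζ ^ b) =
      (Finset.univ.filter fun f : Fin (m + 1) → K =>
          ∏ t, (- f t) = ζ ^ a ∧ ∏ t, (1 - f t) = ζ ^ b).card := by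
    unfold walkCount
    rw [← Fintype.card_subtype, ← Nat.card_eq_fintype_card]
    refine Nat.card_congr (Equiv.subtypeEquivRight fun f => ?_)
    have hs : ((-1 : K) ^ (m + 1)) * (-1) ^ (m + 1) = 1 := by rw [← mul_pow]; simp
    have hp : ∏ t, (- f t) = (-1) ^ (m + 1) * ∏ t, f t := by
      rw [Finset.prod_neg]; simp
    rw [hp]
    constructor
    · rintro ⟨_, h1, h2⟩
      exact ⟨by rw [h1, ← mul_assoc, hs, one_mul], h2⟩
    · rintro ⟨h1, h2⟩
      have h1' : ∏ t, f t = (-1) ^ (m + 1) * ζ ^ a := by rw [← h1, ← mul_assoc, hs, one_mul]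
      refine ⟨fun t => ⟨fun h => ?_, fun h => ?_⟩, h1', h2⟩
      · rw [Finset.prod_eq_zero (Finset.mem_univ t) h, mul_zero] at h1
        exact pow_ne_zero a hζ0 h1.symm
      · rw [Finset.prod_eq_zero (Finset.mem_univ t) (by rw [h, sub_self])] at h2
        exact pow_ne_zero b hζ0 h2.symm
  rw [hc, hw]
  rw [hK, hF] at hmain
  have hR := congrArg (Int.cast : ℤ → ℝ) hmain
  push_cast at hR
  have hne : ((q : ℝ) - 1) ^ 2 ≠ 0 := by
    have : (2 : ℝ) ≤ q := by exact_mod_cast hq2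
    exact pow_ne_zero _ (by linarith)
  rw [Nat.add_sub_cancel]
  rw [← sub_eq_iff_eq_add, eq_div_iff hne]
  refine Eq.trans ?_ (hR.trans (by ring))
  congr!
end

section
/- Let ℓ be an odd prime, q = p^n a prime power, r = ℓ, k = (q^ℓ − 1)/(q − 1), and 0 ≤ a,b ≤ q−2. Define T_ℓ(a,b) = {x ∈ 𝔽_q : x^ℓ = ω^{ak} and (x+1)^ℓ = ω^{bk}}. If p = ℓ, then #T_ℓ(a,b) = 1 when 1 + ω^{ak} − ω^{bk} = 0 and #T_ℓ(a,b) = 0 when 1 + ω^{ak} − ω^{bk} ≠ 0. If p ≠ ℓ, then 0 ≤ #T_ℓ(a,b) ≤ ℓ − 1. -/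
/-- Counting the set `T_ℓ(a,b) = {x ∈ 𝔽_q : x^ℓ = ζ^a, (x+1)^ℓ = ζ^b}` for an odd prime `ℓ`,
where `ζ = ω^k` is a generator of `𝔽_q^×`: if `p = ℓ` then `#T_ℓ(a,b)` is `1` or `0`
according as `1 + ζ^a - ζ^b` is zero or not, and if `p ≠ ℓ` then `#T_ℓ(a,b) ≤ ℓ - 1`. -/
theorem card_T_odd_prime {p n q ℓ : ℕ} (hp : p.Prime) (hn : 1 ≤ n) (hq : q = p ^ n)
    (hℓ : ℓ.Prime) (hodd : Odd ℓ)
    {K : Type*} [Field K] [Fintype K] (hK : Fintype.card K = q)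
    (ζ : Kˣ) (hζ : ∀ x : Kˣ, x ∈ Subgroup.zpowers ζ)
    (a b : ℕ) (ha : a ≤ q - 2) (hb : b ≤ q - 2) :
    (p = ℓ →
      (1 + (ζ : K) ^ a - (ζ : K) ^ b = 0 →
        Nat.card {x : K | x ^ ℓ = (ζ : K) ^ a ∧ (x + 1) ^ ℓ = (ζ : K) ^ b} = 1) ∧
      (1 + (ζ : K) ^ a - (ζ : K) ^ b ≠ 0 →
        Nat.card {x : K | x ^ ℓ = (ζ : K) ^ a ∧ (x + 1) ^ ℓ = (ζ : K) ^ b} = 0)) ∧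
    (p ≠ ℓ →
      Nat.card {x : K | x ^ ℓ = (ζ : K) ^ a ∧ (x + 1) ^ ℓ = (ζ : K) ^ b} ≤ ℓ - 1) := by
  haveI : Fact p.Prime := ⟨hp⟩
  haveI hch : CharP K p := charP_of_card_eq_prime_pow (hK.trans hq)
  refine ⟨?_, ?_⟩
  · intro hpl
    subst hpl
    haveI : ExpChar K p := ExpChar.prime hp
    refine ⟨fun h => ?_, fun h => ?_⟩
    · have hbij : Function.Bijective (frobenius K p) :=
        Finite.injective_iff_bijective.mp (frobenius_inj K p)
      obtain ⟨x, hx⟩ := hbij.2 ((ζ : K) ^ a)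
      rw [frobenius_def] at hx
      have : {x : K | x ^ p = (ζ : K) ^ a ∧ (x + 1) ^ p = (ζ : K) ^ b} = {x} := by
        ext y
        simp only [Set.mem_setOf_eq, Set.mem_singleton_iff]
        constructor
        · rintro ⟨h1, -⟩
          apply hbij.1
          rw [frobenius_def, frobenius_def, h1, hx]
        · rintro rfl
          refine ⟨hx, ?_⟩
          rw [add_pow_char, hx, one_pow]
          linear_combination h
      rw [this]
      simp
    · have : {x : K | x ^ p = (ζ : K) ^ a ∧ (x + 1) ^ p = (ζ : K) ^ b} = ∅ := by
        ext y
        simp only [Set.mem_setOf_eq, Set.mem_empty_iff_false, iff_false]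
        rintro ⟨h1, h2⟩
        rw [add_pow_char, one_pow] at h2
        apply h
        linear_combination h2 - h1
      rw [this]
      simp
  · intro hne
    classical
    have hl0 : (ℓ : K) ≠ 0 := by
      rw [Ne, CharP.cast_eq_zero_iff K p, Nat.prime_dvd_prime_iff_eq hp hℓ]
      exact hne
    have hl2 := hℓ.two_le
    set P : Polynomial K := (Polynomial.X + 1) ^ ℓ - Polynomial.X ^ ℓ
      - Polynomial.C ((ζ : K) ^ b - (ζ : K) ^ a) with hP
    have hco : ∀ m, P.coeff m = (ℓ.choose m : K) - (if m = ℓ then 1 else 0)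
        - (if m = 0 then ((ζ : K) ^ b - (ζ : K) ^ a) else 0) := by
      intro m
      rw [hP, Polynomial.coeff_sub, Polynomial.coeff_sub, Polynomial.coeff_X_add_one_pow,
        Polynomial.coeff_X_pow, Polynomial.coeff_C]
    have hP0 : P ≠ 0 := by
      intro h0
      have h := hco (ℓ - 1)
      rw [h0, if_neg (by omega), if_neg (by omega), Nat.choose_symm (by omega),
        Nat.choose_one_right] at h
      simp at h
      exact hl0 h.symm
    have hdeg : P.natDegree ≤ ℓ - 1 := by
      rw [Polynomial.natDegree_le_iff_coeff_eq_zero]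
      intro m hm
      rw [hco, if_neg (show m ≠ 0 by omega)]
      by_cases hml : m = ℓ
      · simp [hml]
      · rw [if_neg hml, Nat.choose_eq_zero_of_lt (by omega)]
        simp
    have hsub : {x : K | x ^ ℓ = (ζ : K) ^ a ∧ (x + 1) ^ ℓ = (ζ : K) ^ b}
        ⊆ (P.roots.toFinset : Set K) := by
      rintro x ⟨h1, h2⟩
      simp only [Finset.mem_coe, Multiset.mem_toFinset]
      rw [Polynomial.mem_roots hP0, Polynomial.IsRoot, hP]
      simp [h1, h2]
    calc _ ≤ Nat.card (P.roots.toFinset : Set K) := Nat.card_mono (Finset.finite_toSet _) hsub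
      _ = P.roots.toFinset.card := by rw [Nat.card_coe_set_eq, Set.ncard_coe_finset]
      _ ≤ P.roots.card := Multiset.toFinset_card_le _
      _ ≤ P.natDegree := Polynomial.card_roots' P
      _ ≤ ℓ - 1 := hdeg
end

section
/- Let ℓ be an odd prime, q = p^n a prime power, r = ℓ, k = (q^ℓ − 1)/(q − 1), and 0 ≤ a,b ≤ q−2. Then 0 ≤ (a,b)_{q−1} ≤ ℓ·q^{ℓ−2} + 1 if p = ℓ, and 0 ≤ (a,b)_{q−1} ≤ ℓ·q^{ℓ−2} + ℓ − 1 if p ≠ ℓ. -/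
open Polynomial in
theorem root_count {F : Type*} [Field F] (m : ℕ) (hm : 0 < m) (A B : F) (S : Set Fˣ)
    (hS : ∀ x ∈ S, ((x : F) + 1) ^ m * ((x : F) ^ m + A) = B * (x : F) ^ m) :
    Nat.card S ≤ 2 * m := by
  classical
  set P : F[X] := (X + C 1) ^ m * (X ^ m + C A) - C B * X ^ m with hP
  have h1 : ((X + C 1 : F[X]) ^ m * (X ^ m + C A)).Monic :=
    ((monic_X_add_C 1).pow m).mul (monic_X_pow_add_C A hm.ne')
  have d1 : ((X + C 1 : F[X]) ^ m * (X ^ m + C A)).natDegree = 2 * m := by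
    rw [((monic_X_add_C 1).pow m).natDegree_mul (monic_X_pow_add_C A hm.ne'),
      (monic_X_add_C (1 : F)).natDegree_pow, natDegree_X_add_C, natDegree_X_pow_add_C]
    ring
  have d2 : (C B * X ^ m : F[X]).natDegree < ((X + C 1 : F[X]) ^ m * (X ^ m + C A)).natDegree := by
    rw [d1]
    exact lt_of_le_of_lt (natDegree_C_mul_X_pow_le B m) (by omega)
  have hPd : P.natDegree = 2 * m := by
    rw [hP, natDegree_sub_eq_left_of_natDegree_lt d2, d1]
  have hP0 : P ≠ 0 := by
    intro h
    rw [h] at hPd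
    simp at hPd
    omega
  have hsub : ∀ x ∈ S, (x : F) ∈ P.roots.toFinset := by
    intro x hx
    rw [Multiset.mem_toFinset, mem_roots hP0, IsRoot, hP]
    simp [hS x hx]
  have : Nat.card S ≤ Nat.card (P.roots.toFinset : Set F) := by
    apply Nat.card_le_card_of_injective
      (fun x : S => (⟨(x.1 : F), hsub x.1 x.2⟩ : (P.roots.toFinset : Set F)))
    intro x y h
    simp only [Subtype.mk.injEq] at h
    exact Subtype.ext (Units.ext h)
  calc Nat.card S ≤ _ := this
    _ = P.roots.toFinset.card := Nat.card_eq_card_toFinset _ |>.trans (by rw [Finset.toFinset_coe])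
    _ ≤ P.roots.card := Multiset.toFinset_card_le _
    _ ≤ P.natDegree := card_roots' P
    _ = 2 * m := hPd

/-- For an odd prime `ℓ` and `r = ℓ`, the cyclotomic number `(a,b)_{q-1}` over `𝔽_{q^ℓ}`
is at most `ℓ q^{ℓ-2} + 1` if `p = ℓ`, and at most `ℓ q^{ℓ-2} + ℓ - 1` if `p ≠ ℓ`. -/
theorem cycNum_odd_prime_bound {p n q ℓ k : ℕ} (hp : p.Prime) (hn : 1 ≤ n) (hq : q = p ^ n)
    (hℓ : ℓ.Prime) (hodd : Odd ℓ) (hk : k = (q ^ ℓ - 1) / (q - 1))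
    {F : Type*} [Field F] [Fintype F] (hF : Fintype.card F = q ^ ℓ)
    (ω : Fˣ) (hω : ∀ x : Fˣ, x ∈ Subgroup.zpowers ω)
    (a b : ℕ) (ha : a ≤ q - 2) (hb : b ≤ q - 2) :
    (p = ℓ → cycNum ω (q - 1) a b ≤ ℓ * q ^ (ℓ - 2) + 1) ∧
    (p ≠ ℓ → cycNum ω (q - 1) a b ≤ ℓ * q ^ (ℓ - 2) + ℓ - 1) := by
  classical
  have hq2 : 2 ≤ q := by
    rw [hq]; exact hp.two_le.trans (Nat.le_self_pow (by omega) p)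
  have hℓ3 : 3 ≤ ℓ := by
    have := hℓ.two_le
    rcases hodd with ⟨c, hc⟩
    omega
  have hℓo := hodd
  obtain ⟨j, rfl⟩ : ∃ j, ℓ = j + 2 := ⟨ℓ - 2, by omega⟩
  have : Fact p.Prime := ⟨hp⟩
  have : CharP F p := charP_of_card_eq_prime_pow (f := n * (j + 2))
    (by rw [hF, hq, pow_mul])
  set m := ∑ i ∈ Finset.range (j + 1), q ^ i with hm
  have hm0 : 0 < m := by
    rw [hm, Finset.sum_range_succ']; simp
  have hmk : (q - 1) * (m + q ^ (j + 1)) = q ^ (j + 2) - 1 := by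
    rw [hm, ← Finset.sum_range_succ, mul_comm]
    exact geom_sum_mul_of_one_le (by omega) _
  have hpow : ∀ u : Fˣ, (u ^ (q - 1)) ^ (m + q ^ (j + 1)) = 1 := by
    intro u
    rw [← pow_mul, hmk, ← hF, ← Fintype.card_units]
    exact pow_card_eq_one
  have hcos : ∀ c (x : Fˣ), InCycCoset ω (q - 1) c x →
      (x : F) ^ (m + q ^ (j + 1)) = ((ω ^ c) ^ (m + q ^ (j + 1)) : Fˣ) := by
    rintro c x ⟨t, rfl⟩
    rw [← Units.val_pow_eq_pow_val, mul_pow, ← pow_mul _ t, mul_comm t, pow_mul _ _ t, hpow]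
    simp
  have key : cycNum ω (q - 1) a b ≤ 2 * m := by
    apply root_count m hm0 (((ω ^ a) ^ (m + q ^ (j + 1)) : Fˣ) : F)
      (((ω ^ b) ^ (m + q ^ (j + 1)) : Fˣ) : F)
    rintro x ⟨hx, y, hy, hyx⟩
    rw [← hcos a x hx, ← hcos b y hy, hyx, pow_add _ m, pow_add _ m]
    have : ((x : F) + 1) ^ q ^ (j + 1) = (x : F) ^ q ^ (j + 1) + 1 := by
      rw [hq, ← pow_mul, add_pow_char_pow, one_pow]
    rw [this]
    ring
  have hlt : ∑ i ∈ Finset.range j, q ^ i < q ^ j := Nat.geomSum_lt hq2 (by simp)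
  have hm' : m = ∑ i ∈ Finset.range j, q ^ i + q ^ j := by rw [hm, Finset.sum_range_succ]
  have hfin : 2 * m ≤ (j + 2) * q ^ j + 1 := by
    rcases Nat.lt_or_ge j 2 with h | h
    · have : j = 1 := by omega
      subst this
      simp at hm' ⊢
      omega
    · have : 4 * q ^ j ≤ (j + 2) * q ^ j := Nat.mul_le_mul_right _ (by omega)
      omega
  simp only [Nat.add_sub_cancel]
  constructor
  · intro _; omega
  · intro _; omega
end
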